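/- arXiv:1804.08524 — 9 statements merged into one kernel-verified Lean document; each statement's English description precedes it below -/
import Mathlib

section
/- Let X be a bounded random vector in ℝⁿ and let Z be a standard Gaussian vector in ℝⁿ independent of X; set Y = X + Z and f_Y(y) = E[φ_n(y − X)]. Then the conditional expectation of X given the σ-algebra generated by Y satisfies, almost surely, E[X | Y] = Y + ∇f_Y(Y)/f_Y(Y), where ∇f_Y denotes the gradient of f_Y. -/
open MeasureTheory Real

/-- The standard Gaussian density `φ_n(y) = (2π)^{-n/2} exp(-‖y‖²/2)` on `ℝⁿ`. -/
noncomputable def gaussDensity (n : ℕ) (y : EuclideanSpace ℝ (Fin n)) : ℝ :=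
  (2 * Real.pi) ^ (-(n : ℝ) / 2) * Real.exp (-‖y‖ ^ 2 / 2)

/-- The standard Gaussian measure on `ℝⁿ`, given by density `φ_n` w.r.t. Lebesgue. -/
noncomputable def stdGaussian (n : ℕ) : Measure (EuclideanSpace ℝ (Fin n)) :=
  volume.withDensity (fun z => ENNReal.ofReal (gaussDensity n z))

/-!
For additive noise `Y = X + Z` with `X`, `Z` independent and `Z` of density `φ`, the pair `(X, Y)`
has density `φ (y - x)` with respect to `law X ⊗ volume`, so the Bayes formula gives
`E[X | Y = y] = E[φ (y - X) X] / E[φ (y - X)]`. The denominator is `f_Y y`. For the Gaussian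
density `∇φ z = -φ z z`, and differentiating under the expectation gives
`∇f_Y y = E[φ (y - X) (X - y)]`, so the numerator is `∇f_Y y + f_Y y y`.
-/

section Density

variable {Ω γ E : Type*} [MeasurableSpace Ω] [MeasurableSpace γ]
  {P : Measure Ω} {κ : Measure γ} {T : Ω → γ} {f : γ → ℝ}

lemma map_withDensity_comp {δ : Type*} [MeasurableSpace δ] {e : γ → δ} {ρ : δ → ENNReal}
    (he : Measurable e) (hρ : Measurable ρ) :
    (κ.withDensity (ρ ∘ e)).map e = (κ.map e).withDensity ρ := by
  ext s hs
  rw [Measure.map_apply he hs, withDensity_apply _ (he hs), withDensity_apply _ hs,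
    setLIntegral_map hs hρ he]
  rfl

variable [NormedAddCommGroup E] [NormedSpace ℝ E] {h : γ → E}

lemma integrable_comp_iff_of_map_eq_withDensity (hT : AEMeasurable T P) (hf : Measurable f)
    (hf₀ : ∀ z, 0 ≤ f z) (hlaw : P.map T = κ.withDensity fun z => ENNReal.ofReal (f z))
    (hh : AEStronglyMeasurable h (P.map T)) :
    Integrable (fun ω => h (T ω)) P ↔ Integrable (fun z => f z • h z) κ := by
  change Integrable (h ∘ T) P ↔ _
  rw [← integrable_map_measure hh hT, hlaw, integrable_withDensity_iff_integrable_smul'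
    hf.ennreal_ofReal (ae_of_all _ fun _ => ENNReal.ofReal_lt_top)]
  simp only [ENNReal.toReal_ofReal (hf₀ _)]

lemma setIntegral_preimage_of_map_eq_withDensity (hT : AEMeasurable T P) (hf : Measurable f)
    (hf₀ : ∀ z, 0 ≤ f z) (hlaw : P.map T = κ.withDensity fun z => ENNReal.ofReal (f z))
    (hh : AEStronglyMeasurable h (P.map T)) {s : Set γ} (hs : MeasurableSet s) :
    ∫ ω in T ⁻¹' s, h (T ω) ∂P = ∫ z in s, f z • h z ∂κ := by
  rw [← setIntegral_map hs hh hT, hlaw, setIntegral_withDensity_eq_setIntegral_toReal_smul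
    hf.ennreal_ofReal (ae_of_all _ fun _ => ENNReal.ofReal_lt_top) _ hs]
  simp only [ENNReal.toReal_ofReal (hf₀ _)]

end Density

section WeightedMean

variable {α β E : Type*} [MeasurableSpace α] [MeasurableSpace β]
  [NormedAddCommGroup E] [NormedSpace ℝ E]

/-- The mean of `g` under the probability measure whose density with respect to `μ` is
proportional to `w`: the conditional mean in the Bayes formula, when `w` is a section of a joint
density. If `∫ x, w x ∂μ = 0` the value is `0`. -/
noncomputable def weightedMean (μ : Measure α) (w : α → ℝ) (g : α → E) : E :=
  (∫ x, w x ∂μ)⁻¹ • ∫ x, w x • g x ∂μ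

variable {μ : Measure α} {ν : Measure β} {w : α → ℝ} {g : α → E} {f : α × β → ℝ}

lemma integral_smul_weightedMean (hw₀ : ∀ x, 0 ≤ w x) (hw : Integrable w μ) :
    (∫ x, w x ∂μ) • weightedMean μ w g = ∫ x, w x • g x ∂μ := by
  by_cases hzero : ∫ x, w x ∂μ = 0
  · have hw_ae : w =ᵐ[μ] 0 := (integral_eq_zero_iff_of_nonneg hw₀ hw).1 hzero
    rw [hzero, zero_smul, integral_eq_zero_of_ae]
    filter_upwards [hw_ae] with x hx
    simp [hx]
  · exact smul_inv_smul₀ hzero _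

lemma stronglyMeasurable_weightedMean [SFinite μ] (hf : Measurable f) (hg : StronglyMeasurable g) :
    StronglyMeasurable fun y => weightedMean μ (fun x => f (x, y)) g :=
  hf.stronglyMeasurable.integral_prod_left'.measurable.inv.stronglyMeasurable.smul
    (hf.stronglyMeasurable.smul (hg.comp_measurable measurable_fst)).integral_prod_left'

lemma integrable_smul_weightedMean [SFinite μ] [SFinite ν] (hf : Measurable f)
    (hf₀ : ∀ p, 0 ≤ f p) (hfi : Integrable f (μ.prod ν)) (hg : StronglyMeasurable g)
    (hfg : Integrable (fun p => f p • g p.1) (μ.prod ν)) :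
    Integrable (fun p => f p • weightedMean μ (fun x => f (x, p.2)) g) (μ.prod ν) := by
  have hmeas : AEStronglyMeasurable
      (fun p => f p • weightedMean μ (fun x => f (x, p.2)) g) (μ.prod ν) :=
    (hf.stronglyMeasurable.smul
      ((stronglyMeasurable_weightedMean hf hg).comp_measurable measurable_snd)).aestronglyMeasurable
  refine (integrable_prod_iff' hmeas).2 ⟨?_, ?_⟩
  · filter_upwards [hfi.prod_left_ae] with y hy using hy.smul_const _
  refine hfg.norm.integral_prod_right.mono' hmeas.norm.prod_swap.integral_prod_right' ?_
  filter_upwards [hfi.prod_left_ae] with y hy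
  rw [Real.norm_of_nonneg (integral_nonneg fun _ => norm_nonneg _)]
  calc ∫ x, ‖f (x, y) • weightedMean μ (fun x => f (x, y)) g‖ ∂μ
      = ‖(∫ x, f (x, y) ∂μ) • weightedMean μ (fun x => f (x, y)) g‖ := by
        simp only [norm_smul, Real.norm_of_nonneg (hf₀ _), integral_mul_const,
          Real.norm_of_nonneg (integral_nonneg fun x => hf₀ (x, y))]
    _ = ‖∫ x, f (x, y) • g x ∂μ‖ := by rw [integral_smul_weightedMean (fun x => hf₀ (x, y)) hy]
    _ ≤ ∫ x, ‖f (x, y) • g x‖ ∂μ := norm_integral_le_integral_norm _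

lemma setIntegral_smul_weightedMean [CompleteSpace E] [SFinite μ] [SFinite ν] (hf : Measurable f)
    (hf₀ : ∀ p, 0 ≤ f p) (hfi : Integrable f (μ.prod ν)) (hg : StronglyMeasurable g)
    (hfg : Integrable (fun p => f p • g p.1) (μ.prod ν)) (B : Set β) :
    ∫ p in Set.univ ×ˢ B, f p • weightedMean μ (fun x => f (x, p.2)) g ∂(μ.prod ν) =
      ∫ p in Set.univ ×ˢ B, f p • g p.1 ∂(μ.prod ν) := by
  have hmean := (integrable_smul_weightedMean hf hf₀ hfi hg hfg).integrableOn
    (s := Set.univ ×ˢ B)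
  have hfg_on := hfg.integrableOn (s := Set.univ ×ˢ B)
  rw [IntegrableOn, ← Measure.prod_restrict, Measure.restrict_univ] at hmean hfg_on
  rw [← Measure.prod_restrict, Measure.restrict_univ, integral_prod_symm _ hmean,
    integral_prod_symm _ hfg_on]
  refine integral_congr_ae ?_
  filter_upwards [ae_restrict_of_ae hfi.prod_left_ae] with y hy
  rw [integral_smul_const, integral_smul_weightedMean (fun x => hf₀ (x, y)) hy]

end WeightedMean

section Bayes

variable {Ω α β E : Type*} [MeasurableSpace Ω] [MeasurableSpace α] [mβ : MeasurableSpace β]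
  [NormedAddCommGroup E] [NormedSpace ℝ E] [CompleteSpace E]
  {P : Measure Ω} [IsFiniteMeasure P]

theorem condExp_comp_ae_eq_weightedMean {μ : Measure α} [SFinite μ] {ν : Measure β} [SFinite ν]
    {X : Ω → α} {Y : Ω → β} {f : α × β → ℝ} {g : α → E}
    (hX : AEMeasurable X P) (hY : Measurable Y) (hf : Measurable f) (hf₀ : ∀ p, 0 ≤ f p)
    (hlaw : P.map (fun ω => (X ω, Y ω)) = (μ.prod ν).withDensity fun p => ENNReal.ofReal (f p))
    (hg : StronglyMeasurable g) (hgX : Integrable (fun ω => g (X ω)) P) :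
    P[fun ω => g (X ω) | mβ.comap Y] =ᵐ[P]
      fun ω => weightedMean μ (fun x => f (x, Y ω)) g := by
  let M : β → E := fun y => weightedMean μ (fun x => f (x, y)) g
  have hM : StronglyMeasurable M := stronglyMeasurable_weightedMean hf hg
  have hXY : AEMeasurable (fun ω => (X ω, Y ω)) P := hX.prodMk hY.aemeasurable
  have hfst : StronglyMeasurable fun p : α × β => g p.1 := hg.comp_measurable measurable_fst
  have hsnd : StronglyMeasurable fun p : α × β => M p.2 := hM.comp_measurable measurable_snd
  have hfi : Integrable f (μ.prod ν) := by
    simpa using (integrable_comp_iff_of_map_eq_withDensity (h := fun _ => (1 : ℝ)) hXY hf hf₀ hlaw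
      aestronglyMeasurable_const).1 (integrable_const 1)
  have hfg : Integrable (fun p => f p • g p.1) (μ.prod ν) :=
    (integrable_comp_iff_of_map_eq_withDensity hXY hf hf₀ hlaw hfst.aestronglyMeasurable).1 hgX
  have hMY : Integrable (fun ω => M (Y ω)) P :=
    (integrable_comp_iff_of_map_eq_withDensity hXY hf hf₀ hlaw hsnd.aestronglyMeasurable).2
      (integrable_smul_weightedMean hf hf₀ hfi hg hfg)
  refine (ae_eq_condExp_of_forall_setIntegral_eq hY.comap_le hgX
    (fun _ _ _ => hMY.integrableOn) ?_
    (hM.comp_measurable (comap_measurable Y)).aestronglyMeasurable).symm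
  rintro _ ⟨B, hB, rfl⟩ -
  have hpre : Y ⁻¹' B = (fun ω => (X ω, Y ω)) ⁻¹' (Set.univ ×ˢ B) := by ext; simp
  have hUB : MeasurableSet ((Set.univ : Set α) ×ˢ B) := MeasurableSet.univ.prod hB
  rw [hpre, setIntegral_preimage_of_map_eq_withDensity hXY hf hf₀ hlaw
      hsnd.aestronglyMeasurable hUB,
    setIntegral_preimage_of_map_eq_withDensity hXY hf hf₀ hlaw hfst.aestronglyMeasurable hUB]
  exact setIntegral_smul_weightedMean hf hf₀ hfi hg hfg B

variable {G : Type*} [AddGroup G] [mG : MeasurableSpace G] [MeasurableAdd₂ G] [MeasurableNeg G]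
  {ν : Measure G} [SFinite ν] [ν.IsAddLeftInvariant] {X Z : Ω → G}

lemma map_prodMk_add_eq_withDensity {ρ : G → ENNReal} (hX : AEMeasurable X P)
    (hZ : AEMeasurable Z P) (hindep : ProbabilityTheory.IndepFun X Z P) (hρ : Measurable ρ)
    (hZlaw : P.map Z = ν.withDensity ρ) :
    P.map (fun ω => (X ω, X ω + Z ω)) =
      ((P.map X).prod ν).withDensity fun p => ρ (-p.1 + p.2) := by
  let shear : G × G → G × G := fun p => (p.1, p.1 + p.2)
  have hshear : MeasurePreserving shear ((P.map X).prod ν) ((P.map X).prod ν) :=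
    measurePreserving_prod_add _ _
  have : SFinite (ν.withDensity ρ) := hZlaw ▸ inferInstance
  calc P.map (fun ω => (X ω, X ω + Z ω))
      = (P.map fun ω => (X ω, Z ω)).map shear :=
        (AEMeasurable.map_map_of_aemeasurable hshear.measurable.aemeasurable (hX.prodMk hZ)).symm
    _ = (((P.map X).prod ν).withDensity fun p => ρ p.2).map shear := by
        rw [(ProbabilityTheory.indepFun_iff_map_prod_eq_prod_map_map hX hZ).1 hindep, hZlaw,
          prod_withDensity_right hρ]
    _ = (((P.map X).prod ν).withDensity ((fun p => ρ (-p.1 + p.2)) ∘ shear)).map shear := by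
        simp only [shear, Function.comp_def, neg_add_cancel_left]
    _ = ((P.map X).prod ν).withDensity fun p => ρ (-p.1 + p.2) := by
        rw [map_withDensity_comp hshear.measurable (by fun_prop), hshear.map_eq]

theorem condExp_comp_add_ae_eq_weightedMean {ρ : G → ℝ} {g : G → E} (hX : Measurable X)
    (hZ : Measurable Z) (hindep : ProbabilityTheory.IndepFun X Z P) (hρ : Measurable ρ)
    (hρ₀ : ∀ z, 0 ≤ ρ z) (hZlaw : P.map Z = ν.withDensity fun z => ENNReal.ofReal (ρ z))
    (hg : StronglyMeasurable g) (hgX : Integrable (fun ω => g (X ω)) P) :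
    P[fun ω => g (X ω) | mG.comap fun ω => X ω + Z ω] =ᵐ[P]
      fun ω => weightedMean (P.map X) (fun x => ρ (-x + (X ω + Z ω))) g := by
  have hf : Measurable fun p : G × G => ρ (-p.1 + p.2) := by fun_prop
  have hlaw := map_prodMk_add_eq_withDensity hX.aemeasurable hZ.aemeasurable hindep
    hρ.ennreal_ofReal hZlaw
  exact condExp_comp_ae_eq_weightedMean hX.aemeasurable (hX.add hZ) hf (fun _ => hρ₀ _) hlaw hg hgX

end Bayes

lemma hasGradientAt_integral_comp_sub {α F : Type*} [MeasurableSpace α] {μ : Measure α}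
    [IsFiniteMeasure μ] [NormedAddCommGroup F] [InnerProductSpace ℝ F] [CompleteSpace F]
    {φ : F → ℝ} {φ' : F → F} {X : α → F} {C : ℝ} {y : F}
    (hX : AEStronglyMeasurable X μ) (hφ : ∀ z, HasGradientAt φ (φ' z) z) (hφ' : Continuous φ')
    (hC : ∀ z, ‖φ' z‖ ≤ C) (hint : Integrable (fun a => φ (y - X a)) μ) :
    HasGradientAt (fun y => ∫ a, φ (y - X a) ∂μ) (∫ a, φ' (y - X a) ∂μ) y := by
  let toDual := InnerProductSpace.toDual ℝ F
  have hsub : ∀ y, AEStronglyMeasurable (fun a => y - X a) μ :=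
    fun y => aestronglyMeasurable_const.sub hX
  have hφ_cont : Continuous φ := continuous_iff_continuousAt.2 fun z => (hφ z).continuousAt
  have hderiv : HasFDerivAt (fun y => ∫ a, φ (y - X a) ∂μ) (∫ a, toDual (φ' (y - X a)) ∂μ) y :=
    hasFDerivAt_integral_of_dominated_of_fderiv_le (F' := fun y a => toDual (φ' (y - X a)))
      (bound := fun _ => C) Filter.univ_mem
      (.of_forall fun y => hφ_cont.comp_aestronglyMeasurable (hsub y)) hint
      ((toDual.continuous.comp hφ').comp_aestronglyMeasurable (hsub y))
      (ae_of_all _ fun a y _ => (toDual.norm_map _).trans_le (hC _)) (integrable_const C)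
      (ae_of_all _ fun a y _ => (hasFDerivAt_comp_sub (X a)).2 (hφ (y - X a)).hasFDerivAt)
  have hcomm : ∫ a, toDual (φ' (y - X a)) ∂μ = toDual (∫ a, φ' (y - X a) ∂μ) :=
    toDual.toLinearIsometry.integral_comp_comm _
  rw [hcomm] at hderiv
  exact hderiv

section Gaussian

variable {n : ℕ}

lemma gaussDensity_pos (z : EuclideanSpace ℝ (Fin n)) : 0 < gaussDensity n z := by
  unfold gaussDensity; positivity

@[fun_prop]
lemma continuous_gaussDensity : Continuous (gaussDensity n) := by
  unfold gaussDensity; fun_prop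

lemma gaussDensity_le (z : EuclideanSpace ℝ (Fin n)) :
    gaussDensity n z ≤ (2 * π) ^ (-(n : ℝ) / 2) :=
  mul_le_of_le_one_right (by positivity)
    (Real.exp_le_one_iff.2 (by linarith [sq_nonneg ‖z‖]))

lemma norm_gaussDensity_smul_le (z : EuclideanSpace ℝ (Fin n)) :
    ‖gaussDensity n z • z‖ ≤ (2 * π) ^ (-(n : ℝ) / 2) := by
  have hexp : Real.exp (-‖z‖ ^ 2 / 2) * ‖z‖ ≤ 1 := by
    rw [neg_div, Real.exp_neg, inv_mul_le_iff₀ (Real.exp_pos _), mul_one]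
    nlinarith [Real.add_one_le_exp (‖z‖ ^ 2 / 2), sq_nonneg (‖z‖ - 1)]
  rw [norm_smul, Real.norm_of_nonneg (gaussDensity_pos z).le, gaussDensity, mul_assoc]
  exact mul_le_of_le_one_right (by positivity) hexp

lemma hasGradientAt_gaussDensity (z : EuclideanSpace ℝ (Fin n)) :
    HasGradientAt (gaussDensity n) (-(gaussDensity n z • z)) z := by
  have hsq : HasFDerivAt (fun z : EuclideanSpace ℝ (Fin n) => -‖z‖ ^ 2 / 2) (-innerSL ℝ z) z := by
    refine (((hasStrictFDerivAt_norm_sq z).hasFDerivAt.const_mul (-1 / 2 : ℝ)).congr_fderiv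
      ?_).congr_of_eventuallyEq (.of_forall fun w => by ring)
    ext v
    simp [← mul_assoc]
  rw [hasGradientAt_iff_hasFDerivAt]
  refine (hsq.exp.const_mul ((2 * π) ^ (-(n : ℝ) / 2))).congr_fderiv ?_
  ext v
  simp [gaussDensity, mul_assoc]

variable {μ : Measure (EuclideanSpace ℝ (Fin n))} [IsFiniteMeasure μ]

lemma integrable_gaussDensity_sub (y : EuclideanSpace ℝ (Fin n)) :
    Integrable (fun x => gaussDensity n (y - x)) μ :=
  .of_bound (continuous_gaussDensity.comp (continuous_sub_left y)).aestronglyMeasurable _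
    (ae_of_all _ fun x =>
      (Real.norm_of_nonneg (gaussDensity_pos _).le).trans_le (gaussDensity_le (y - x)))

lemma integrable_gaussDensity_sub_smul (y : EuclideanSpace ℝ (Fin n)) :
    Integrable (fun x => gaussDensity n (y - x) • (y - x)) μ :=
  .of_bound (by fun_prop) _
    (ae_of_all _ fun x => norm_gaussDensity_smul_le (y - x))

lemma integral_gaussDensity_sub_pos [NeZero μ] (y : EuclideanSpace ℝ (Fin n)) :
    0 < ∫ x, gaussDensity n (y - x) ∂μ := by
  have hsupp : Function.support (fun x => gaussDensity n (y - x)) = Set.univ :=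
    Set.eq_univ_of_forall fun x => (gaussDensity_pos (y - x)).ne'
  rw [integral_pos_iff_support_of_nonneg (fun x => (gaussDensity_pos (y - x)).le)
    (integrable_gaussDensity_sub y), hsupp]
  exact NeZero.pos _

lemma gradient_integral_gaussDensity_sub (y : EuclideanSpace ℝ (Fin n)) :
    gradient (fun y => ∫ x, gaussDensity n (y - x) ∂μ) y =
      ∫ x, gaussDensity n (y - x) • x ∂μ - (∫ x, gaussDensity n (y - x) ∂μ) • y := by
  have hsplit : ∀ x, gaussDensity n (y - x) • x =
      gaussDensity n (y - x) • y - gaussDensity n (y - x) • (y - x) := by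
    intro x; rw [← smul_sub, sub_sub_cancel]
  have hgrad := (hasGradientAt_integral_comp_sub (X := id) (y := y) aestronglyMeasurable_id
    hasGradientAt_gaussDensity (by fun_prop)
    (fun z => (norm_neg _).trans_le (norm_gaussDensity_smul_le z))
    (integrable_gaussDensity_sub (μ := μ) y)).gradient
  simp only [id] at hgrad
  simp only [hgrad, hsplit]
  rw [integral_neg, integral_sub ((integrable_gaussDensity_sub y).smul_const y)
    (integrable_gaussDensity_sub_smul y), integral_smul_const, sub_sub_cancel_left]

theorem add_smul_gradient_integral_gaussDensity_sub [NeZero μ] (y : EuclideanSpace ℝ (Fin n)) :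
    y + (∫ x, gaussDensity n (y - x) ∂μ)⁻¹ •
        gradient (fun y => ∫ x, gaussDensity n (y - x) ∂μ) y =
      weightedMean μ (fun x => gaussDensity n (y - x)) id := by
  rw [gradient_integral_gaussDensity_sub, smul_sub,
    inv_smul_smul₀ (integral_gaussDensity_sub_pos y).ne', add_sub_cancel]
  rfl

end Gaussian

theorem stmt5_general (n : ℕ) {Ω : Type*} [mΩ : MeasurableSpace Ω] (ℙ : Measure Ω)
    [IsProbabilityMeasure ℙ]
    (X Z : Ω → EuclideanSpace ℝ (Fin n)) (hX : Measurable X) (hZ : Measurable Z)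
    (hXint : Integrable X ℙ)
    (hZlaw : Measure.map Z ℙ = stdGaussian n)
    (hindep : ProbabilityTheory.IndepFun X Z ℙ)
    (Y : Ω → EuclideanSpace ℝ (Fin n)) (hY : ∀ ω, Y ω = X ω + Z ω)
    (fY : EuclideanSpace ℝ (Fin n) → ℝ)
    (hfY : ∀ y, fY y = ∫ ω, gaussDensity n (y - X ω) ∂ℙ) :
    ℙ[X | MeasurableSpace.comap Y (borel (EuclideanSpace ℝ (Fin n)))] =ᵐ[ℙ]
      fun ω => Y ω + (fY (Y ω))⁻¹ • gradient fY (Y ω) := by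
  obtain rfl : Y = fun ω => X ω + Z ω := funext hY
  obtain rfl : fY = fun y => ∫ x, gaussDensity n (y - x) ∂ℙ.map X := funext fun y => by
    rw [hfY, integral_map hX.aemeasurable (integrable_gaussDensity_sub y).1]
  have := Measure.isProbabilityMeasure_map (μ := ℙ) hX.aemeasurable
  have hbayes := condExp_comp_add_ae_eq_weightedMean hX hZ hindep
    continuous_gaussDensity.measurable (fun z => (gaussDensity_pos z).le) hZlaw
    stronglyMeasurable_id hXint
  simp only [neg_add_eq_sub, id] at hbayes
  simpa only [add_smul_gradient_integral_gaussDensity_sub,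
    ← BorelSpace.measurable_eq (α := EuclideanSpace ℝ (Fin n))] using hbayes

/-- Let `X` be a bounded random vector in `ℝⁿ`, `Z` an independent
standard Gaussian vector, `Y = X + Z`, and `f_Y(y) = E[φ_n(y - X)]`.  Then, almost
surely, `E[X | Y] = Y + ∇f_Y(Y)/f_Y(Y)`. -/
theorem stmt5 (n : ℕ) {Ω : Type*} [mΩ : MeasurableSpace Ω] (ℙ : Measure Ω)
    [IsProbabilityMeasure ℙ]
    (X Z : Ω → EuclideanSpace ℝ (Fin n)) (hX : Measurable X) (hZ : Measurable Z)
    (hbdd : ∃ C : ℝ, ∀ ω, ‖X ω‖ ≤ C)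
    (hZlaw : Measure.map Z ℙ = stdGaussian n)
    (hindep : ProbabilityTheory.IndepFun X Z ℙ)
    (Y : Ω → EuclideanSpace ℝ (Fin n)) (hY : ∀ ω, Y ω = X ω + Z ω)
    (fY : EuclideanSpace ℝ (Fin n) → ℝ)
    (hfY : ∀ y, fY y = ∫ ω, gaussDensity n (y - X ω) ∂ℙ) :
    ℙ[X | MeasurableSpace.comap Y (borel (EuclideanSpace ℝ (Fin n)))] =ᵐ[ℙ]
      fun ω => Y ω + (fY (Y ω))⁻¹ • gradient fY (Y ω) := by
  obtain ⟨C, hC⟩ := hbdd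
  exact stmt5_general n ℙ X Z hX hZ (.of_bound hX.aestronglyMeasurable C (ae_of_all _ hC))
    hZlaw hindep Y hY fY hfY
end

section
/- Let R > 0, let X be a real random variable uniform on the two-point set {−R, R} (each with probability 1/2), and let Z be a standard Gaussian real random variable independent of X. Then, almost surely, E[X | X + Z] = R · tanh(R (X + Z)). -/
open MeasureTheory Real

/-!
The pair `(X, X + Z)` has density `f (y - x)` with respect to `law X ⊗ dy`, where `f` is the density
of `Z`. Hence `E[h (X, X + Z) | X + Z]` vanishes as soon as `∫ f (y - x) h (x, y) d(law X) (x) = 0`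
for almost every `y`. For the symmetric two-point law and `h (x, y) = x - R tanh (R y)` this is the
identity `f (y + R) e ^ (R y) = f (y - R) e ^ (- R y)` between Gaussian densities.
-/

section DensityOfSum

open ProbabilityTheory
open scoped ENNReal

lemma map_withDensity_comp_of_measurePreserving {α β : Type*} [MeasurableSpace α]
    [MeasurableSpace β] {μ : Measure α} {ν : Measure β} {e : α → β} (he : MeasurePreserving e μ ν)
    {f : β → ℝ≥0∞} (hf : Measurable f) :
    (μ.withDensity (f ∘ e)).map e = ν.withDensity f := by
  ext s hs
  rw [Measure.map_apply he.measurable hs, withDensity_apply _ (he.measurable hs),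
    withDensity_apply _ hs]
  exact he.setLIntegral_comp_preimage hs hf

lemma map_prodMk_add_of_indepFun {Ω G : Type*} [MeasurableSpace Ω] [MeasurableSpace G] [AddGroup G]
    [MeasurableAdd₂ G] [MeasurableNeg G] {P : Measure Ω} [IsFiniteMeasure P] {ν : Measure G}
    [SFinite ν] [ν.IsAddLeftInvariant] {X Z : Ω → G} (hX : AEMeasurable X P)
    (hZ : AEMeasurable Z P) (hXZ : IndepFun X Z P) {f : G → ℝ≥0∞} (hf : Measurable f)
    (hZlaw : P.map Z = ν.withDensity f) :
    P.map (fun ω ↦ (X ω, X ω + Z ω)) =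
      ((P.map X).prod ν).withDensity (fun p ↦ f (-p.1 + p.2)) := by
  have hshear := measurePreserving_prod_add (P.map X) ν
  have hlaw : P.map (fun ω ↦ (X ω, Z ω)) = ((P.map X).prod ν).withDensity (fun p ↦ f p.2) := by
    rw [hXZ.map_prod_eq_prod_map_map hX hZ, hZlaw, prod_withDensity_right hf]
  calc P.map (fun ω ↦ (X ω, X ω + Z ω))
      = (P.map (fun ω ↦ (X ω, Z ω))).map (fun p ↦ (p.1, p.1 + p.2)) :=
        (AEMeasurable.map_map_of_aemeasurable hshear.measurable.aemeasurable
          (hX.prodMk hZ)).symm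
    _ = ((P.map X).prod ν).withDensity (fun p ↦ f (-p.1 + p.2)) := by
        rw [hlaw, ← map_withDensity_comp_of_measurePreserving hshear
          (f := fun p ↦ f (-p.1 + p.2)) (by fun_prop)]
        simp only [Function.comp_def, neg_add_cancel_left]

end DensityOfSum

section ConditionalExpectation

open scoped ENNReal

variable {Ω α β E : Type*} [NormedAddCommGroup E] [NormedSpace ℝ E]

lemma setIntegral_univ_prod_withDensity_eq_zero [MeasurableSpace α] [MeasurableSpace β]
    {μ : Measure α} {ν : Measure β} [SFinite μ] [SFinite ν] {f : α × β → ℝ≥0∞}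
    (hf : Measurable f) (hf_top : ∀ᵐ p ∂μ.prod ν, f p < ∞) {h : α × β → E}
    (hh : Integrable h ((μ.prod ν).withDensity f))
    (hzero : ∀ᵐ y ∂ν, ∫ x, (f (x, y)).toReal • h (x, y) ∂μ = 0) (A : Set β) :
    ∫ p in Set.univ ×ˢ A, h p ∂(μ.prod ν).withDensity f = 0 := by
  have hfh : Integrable (fun p ↦ (f p).toReal • h p) (μ.prod ν) :=
    (integrable_withDensity_iff_integrable_smul' hf hf_top).1 hh
  rw [setIntegral_withDensity_eq_setIntegral_toReal_smul' _ hf (ae_restrict_of_ae hf_top),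
    ← Measure.prod_restrict, Measure.restrict_univ, integral_prod_symm]
  · exact integral_eq_zero_of_ae (ae_restrict_of_ae hzero)
  · rw [← Measure.restrict_univ (μ := μ), Measure.prod_restrict]
    exact hfh.restrict

lemma condExp_comap_ae_eq_zero_of_integral_density_smul_eq_zero [CompleteSpace E]
    [MeasurableSpace Ω] [MeasurableSpace α] [mβ : MeasurableSpace β] {P : Measure Ω}
    [IsFiniteMeasure P] {μ : Measure α} {ν : Measure β} [SFinite μ] [SFinite ν]
    {X : Ω → α} {Y : Ω → β} (hX : AEMeasurable X P) (hY : Measurable Y) {f : α × β → ℝ≥0∞}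
    (hf : Measurable f) (hlaw : P.map (fun ω ↦ (X ω, Y ω)) = (μ.prod ν).withDensity f)
    {h : α × β → E} (hh : Integrable h (P.map fun ω ↦ (X ω, Y ω)))
    (hzero : ∀ᵐ y ∂ν, ∫ x, (f (x, y)).toReal • h (x, y) ∂μ = 0) :
    P[fun ω ↦ h (X ω, Y ω) | mβ.comap Y] =ᵐ[P] 0 := by
  have hXY : AEMeasurable (fun ω ↦ (X ω, Y ω)) P := hX.prodMk hY.aemeasurable
  have hf_top : ∀ᵐ p ∂μ.prod ν, f p < ∞ := by
    refine ae_lt_top hf ?_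
    rw [← setLIntegral_univ, ← withDensity_apply _ .univ, ← hlaw]
    exact measure_ne_top _ _
  refine (ae_eq_condExp_of_forall_setIntegral_eq hY.comap_le (hh.comp_aemeasurable hXY)
    (fun _ _ _ ↦ integrableOn_zero) ?_ aestronglyMeasurable_zero).symm
  rintro _ ⟨A, hA, rfl⟩ -
  calc ∫ ω in Y ⁻¹' A, (0 : Ω → E) ω ∂P
      = 0 := integral_zero _ _
    _ = ∫ p in Set.univ ×ˢ A, h p ∂P.map (fun ω ↦ (X ω, Y ω)) := by
        rw [hlaw] at hh ⊢
        exact (setIntegral_univ_prod_withDensity_eq_zero hf hf_top hh hzero A).symm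
    _ = ∫ ω in (fun ω ↦ (X ω, Y ω)) ⁻¹' (Set.univ ×ˢ A), h (X ω, Y ω) ∂P :=
        setIntegral_map (MeasurableSet.univ.prod hA) hh.aestronglyMeasurable hXY
    _ = ∫ ω in Y ⁻¹' A, h (X ω, Y ω) ∂P := by
        rw [Set.mk_preimage_prod, Set.preimage_univ, Set.univ_inter]

lemma condExp_ae_eq_of_condExp_sub_ae_eq_zero [CompleteSpace E] {m mΩ : MeasurableSpace Ω}
    (hm : m ≤ mΩ) {P : Measure Ω} [SigmaFinite (P.trim hm)] {f g : Ω → E} (hf : Integrable f P)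
    (hg : Integrable g P) (hgm : StronglyMeasurable[m] g) (hfg : P[f - g | m] =ᵐ[P] 0) :
    P[f | m] =ᵐ[P] g := by
  filter_upwards [condExp_sub hf hg m, hfg] with ω hsub hzero
  rw [hzero, Pi.sub_apply, condExp_of_stronglyMeasurable hm hgm hg] at hsub
  exact sub_eq_zero.1 hsub.symm

end ConditionalExpectation

section SymmetricTwoPoint

open ProbabilityTheory
open scoped ENNReal NNReal

lemma integrable_half_smul_dirac {α E : Type*} [MeasurableSpace α] [MeasurableSingletonClass α]
    [NormedAddCommGroup E] (a : α) (f : α → E) :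
    Integrable f ((1 / 2 : ℝ≥0∞) • Measure.dirac a) :=
  (integrable_dirac enorm_lt_top).smul_measure (by simp)

lemma integral_half_smul_dirac_add_half_smul_dirac {α E : Type*} [MeasurableSpace α]
    [MeasurableSingletonClass α] [NormedAddCommGroup E] [NormedSpace ℝ E] [CompleteSpace E]
    (a b : α) (f : α → E) :
    ∫ x, f x ∂((1 / 2 : ℝ≥0∞) • Measure.dirac a + (1 / 2 : ℝ≥0∞) • Measure.dirac b) =
      (1 / 2 : ℝ) • (f a + f b) := by
  rw [integral_add_measure (integrable_half_smul_dirac a f) (integrable_half_smul_dirac b f)]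
  simp

lemma gaussianPDFReal_add_mul_exp (m x y : ℝ) (v : ℝ≥0) :
    gaussianPDFReal m v (y + x) * exp (x * (y - m) / v) =
      gaussianPDFReal m v (y - x) * exp (-(x * (y - m) / v)) := by
  simp only [gaussianPDFReal, mul_assoc, ← Real.exp_add]
  congr 2
  ring

-- Clearing the denominator `cosh a` turns `1 ± tanh a` into `exp (± a)`.
lemma gaussianPDFReal_mul_sub_tanh_add_eq_zero (R m y : ℝ) (v : ℝ≥0) :
    gaussianPDFReal m v (y + R) * (-R - R * tanh (R * (y - m) / v)) +
      gaussianPDFReal m v (y - R) * (R - R * tanh (R * (y - m) / v)) = 0 := by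
  have hratio := gaussianPDFReal_add_mul_exp m R y v
  set a := R * (y - m) / v
  have hcosh : cosh a ≠ 0 := (cosh_pos a).ne'
  rw [← cosh_add_sinh, ← cosh_sub_sinh] at hratio
  rw [tanh_eq_sinh_div_cosh]
  field_simp
  linear_combination (-R) * hratio

lemma continuous_real_tanh : Continuous tanh := by
  simp only [funext tanh_eq_sinh_div_cosh]
  exact continuous_sinh.div continuous_cosh fun x ↦ (cosh_pos x).ne'

theorem stmt6_general (R m : ℝ) {v : ℝ≥0} (hv : v ≠ 0) {Ω : Type*} [MeasurableSpace Ω]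
    {P : Measure Ω} [IsFiniteMeasure P] {X Z : Ω → ℝ} (hX : Measurable X) (hZ : Measurable Z)
    (hXlaw : P.map X = (1 / 2 : ℝ≥0∞) • Measure.dirac (-R) + (1 / 2 : ℝ≥0∞) • Measure.dirac R)
    (hZlaw : P.map Z = gaussianReal m v) (hXZ : IndepFun X Z P) :
    P[X | MeasurableSpace.comap (fun ω ↦ X ω + Z ω) (borel ℝ)] =ᵐ[P]
      fun ω ↦ R * tanh (R * (X ω + Z ω - m) / v) := by
  rw [← BorelSpace.measurable_eq (α := ℝ)]
  set T : ℝ → ℝ := fun y ↦ R * tanh (R * (y - m) / v) with hT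
  have hTmeas : Measurable T := by have := continuous_real_tanh.measurable; fun_prop
  have hY : Measurable (fun ω ↦ X ω + Z ω) := hX.add hZ
  have hXint : Integrable X P := by
    have hid : Integrable id (P.map X) := hXlaw ▸
      (integrable_half_smul_dirac (-R) id).add_measure (integrable_half_smul_dirac R id)
    exact hid.comp_measurable hX
  have hTint : Integrable (fun ω ↦ T (X ω + Z ω)) P :=
    .of_bound (hTmeas.comp hY).aestronglyMeasurable |R| <| .of_forall fun ω ↦ by
      simpa only [hT, norm_eq_abs, abs_mul] using
        mul_le_of_le_one_right (abs_nonneg R) (abs_tanh_lt_one _).le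
  refine condExp_ae_eq_of_condExp_sub_ae_eq_zero hY.comap_le hXint hTint
    (hTmeas.comp (comap_measurable _)).stronglyMeasurable ?_
  have hlaw := map_prodMk_add_of_indepFun hX.aemeasurable hZ.aemeasurable hXZ
    (measurable_gaussianPDF m v) (hZlaw.trans (gaussianReal_of_var_ne_zero m hv))
  refine condExp_comap_ae_eq_zero_of_integral_density_smul_eq_zero hX.aemeasurable hY
    (by fun_prop) hlaw (h := fun p ↦ p.1 - T p.2) ?_ (.of_forall fun y ↦ ?_)
  · exact (integrable_map_measure (by fun_prop) (by fun_prop)).2 (hXint.sub hTint)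
  · rw [hXlaw, integral_half_smul_dirac_add_half_smul_dirac]
    simp only [toReal_gaussianPDF, neg_neg, neg_add_eq_sub, add_comm R y, smul_eq_mul, hT,
      gaussianPDFReal_mul_sub_tanh_add_eq_zero, mul_zero]

end SymmetricTwoPoint

/-- Let `R > 0`, let `X` be uniform on `{-R, R}` and `Z ~ N(0,1)`
independent of `X`.  Then, almost surely, `E[X | X + Z] = R · tanh(R(X + Z))`. -/
theorem stmt6 (R : ℝ) (hR : 0 < R)
    {Ω : Type*} [mΩ : MeasurableSpace Ω] (P : Measure Ω) [IsProbabilityMeasure P]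
    (X Z : Ω → ℝ) (hX : Measurable X) (hZ : Measurable Z)
    (hXlaw : Measure.map X P =
      (1 / 2 : ENNReal) • Measure.dirac (-R) + (1 / 2 : ENNReal) • Measure.dirac R)
    (hZlaw : Measure.map Z P = ProbabilityTheory.gaussianReal 0 1)
    (hindep : ProbabilityTheory.IndepFun X Z P) :
    P[X | MeasurableSpace.comap (fun ω => X ω + Z ω) (borel ℝ)] =ᵐ[P]
      fun ω => R * Real.tanh (R * (X ω + Z ω)) := by
  simpa using stmt6_general R 0 one_ne_zero hX hZ hXlaw hZlaw hindep
end

section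
/- Let n = 3 and R > 0. For every y ∈ ℝ³ with y ≠ 0, the posterior mean of the uniform distribution on the sphere of radius R under Gaussian observation satisfies ( ∫_{S²} (Rθ) φ_3(y − Rθ) dσ̄_2(θ) ) / ( ∫_{S²} φ_3(y − Rθ) dσ̄_2(θ) ) = R · (y/‖y‖) · ( coth(R‖y‖) − 1/(R‖y‖) ). -/
open MeasureTheory Real

/-- The uniform probability measure `σ̄₂` on the unit sphere `S²` of `ℝ³`:
the surface measure `volume.toSphere` normalized to total mass `1`. -/
noncomputable def unifSphere2 : Measure (Metric.sphere (0 : EuclideanSpace ℝ (Fin 3)) 1) :=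
  ((volume : Measure (EuclideanSpace ℝ (Fin 3))).toSphere Set.univ)⁻¹ •
    (volume : Measure (EuclideanSpace ℝ (Fin 3))).toSphere

/-- The standard Gaussian density `φ₃(y) = (2π)^{-3/2} exp(-‖y‖²/2)` on `ℝ³`. -/
noncomputable def gaussDensity3 (y : EuclideanSpace ℝ (Fin 3)) : ℝ :=
  (2 * Real.pi) ^ (-(3 : ℝ) / 2) * Real.exp (-‖y‖ ^ 2 / 2)

/-!
On the sphere of radius `R` the Gaussian weight at `y` is a constant times `exp (t * ⟪u, θ⟫)`,
where `t = R * ‖y‖` and `u` is the direction of `y`. Write `A k = ∫ ⟪u, θ⟫ ^ k * exp (t * ⟪u, θ⟫)`,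
so that `A k` has derivative `A (k + 1)` in `t`. By reflection symmetry the posterior mean is
`(R * A 1 / A 0) • u`. In dimension `n`, infinitesimal rotation invariance gives the Bessel-type
equation `(n - 1) * A 1 = t * (A 0 - A 2)`, which for `n = 3` says that `f = t * A 0` satisfies
`f'' = f`. As `f` vanishes at `0`, its Wronskian with `sinh` is zero, that is,
`(A 0 + t * A 1) * sinh t = t * A 0 * cosh t`, and hence `A 1 / A 0 = coth t - 1 / t`.
-/

open Metric

section CompactSpace

variable {X G : Type*} [TopologicalSpace X] [CompactSpace X] [MeasurableSpace X]
  [OpensMeasurableSpace X] [NormedAddCommGroup G] (μ : Measure X) [IsFiniteMeasure μ]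

lemma integrable_of_continuous_compactSpace {f : X → G} (hf : Continuous f) : Integrable f μ :=
  hf.integrable_of_hasCompactSupport (.of_compactSpace f)

lemma hasDerivAt_integral_of_continuous_compactSpace [NormedSpace ℝ G] {F F' : ℝ → X → G}
    (hF : ∀ t, Continuous (F t)) (hF' : Continuous (Function.uncurry F'))
    (hderiv : ∀ t x, HasDerivAt (F · x) (F' t x) t) (t₀ : ℝ) :
    HasDerivAt (fun t ↦ ∫ x, F t x ∂μ) (∫ x, F' t₀ x ∂μ) t₀ := by
  obtain ⟨C, hC⟩ := ((isCompact_closedBall t₀ 1).prod isCompact_univ).exists_bound_of_continuousOn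
    hF'.continuousOn
  exact (hasDerivAt_integral_of_dominated_loc_of_deriv_le (closedBall_mem_nhds t₀ one_pos)
    (.of_forall fun t ↦ (integrable_of_continuous_compactSpace μ (hF t)).aestronglyMeasurable)
    (integrable_of_continuous_compactSpace μ (hF t₀))
    (integrable_of_continuous_compactSpace μ hF'.curry_right).aestronglyMeasurable
    (.of_forall fun x t ht ↦ hC (t, x) ⟨ht, Set.mem_univ x⟩) (integrable_const C)
    (.of_forall fun x t _ ↦ hderiv t x)).2

end CompactSpace

variable {E : Type*} [NormedAddCommGroup E] [InnerProductSpace ℝ E]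

lemma exp_neg_norm_sub_sq_div_two (x y : E) :
    exp (-‖x - y‖ ^ 2 / 2) = exp (-(‖x‖ ^ 2 + ‖y‖ ^ 2) / 2) * exp (inner ℝ x y) := by
  rw [← exp_add, norm_sub_sq_real]
  ring_nf

lemma exists_orthonormalBasis_apply_eq [FiniteDimensional ℝ E] {u : E} (hu : ‖u‖ = 1) :
    ∃ (i : Fin (Module.finrank ℝ E)) (b : OrthonormalBasis (Fin (Module.finrank ℝ E)) ℝ E),
      b i = u := by
  have : Nontrivial E := ⟨u, 0, by rintro rfl; simp at hu⟩
  let i : Fin (Module.finrank ℝ E) := ⟨0, Module.finrank_pos⟩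
  obtain ⟨b, hb⟩ := Orthonormal.exists_orthonormalBasis_extension_of_card_eq (𝕜 := ℝ)
    (Fintype.card_fin _).symm (v := fun _ ↦ u) (s := {i})
    ⟨fun _ ↦ hu, fun j k hjk ↦ (hjk (Subsingleton.elim j k)).elim⟩
  exact ⟨i, b, hb i rfl⟩

/-- The action of a linear isometry on the unit sphere, used to express that a measure on the
sphere is rotation invariant. -/
def sphereHomeomorph (ρ : E ≃ₗᵢ[ℝ] E) : sphere (0 : E) 1 ≃ₜ sphere (0 : E) 1 :=
  ρ.toHomeomorph.subtype fun x ↦ by simp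

@[simp]
lemma coe_sphereHomeomorph (ρ : E ≃ₗᵢ[ℝ] E) (θ : sphere (0 : E) 1) :
    (sphereHomeomorph ρ θ : E) = ρ θ :=
  rfl

variable [MeasurableSpace E]

/-- Invariance of a measure on the unit sphere under the full orthogonal group: the only property
of the uniform measure that the computation of the posterior mean relies on. -/
def IsIsometryInvariant (μ : Measure (sphere (0 : E) 1)) : Prop :=
  ∀ ρ : E ≃ₗᵢ[ℝ] E, MeasurePreserving (sphereHomeomorph ρ) μ μ

lemma IsIsometryInvariant.smul_measure {μ : Measure (sphere (0 : E) 1)}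
    (hμ : IsIsometryInvariant μ) (c : ENNReal) : IsIsometryInvariant (c • μ) :=
  fun ρ ↦ (hμ ρ).smul_measure c

variable [BorelSpace E]

open scoped Pointwise in
lemma isIsometryInvariant_toSphere {ν : Measure E}
    (hν : ∀ ρ : E ≃ₗᵢ[ℝ] E, MeasurePreserving ρ ν ν) : IsIsometryInvariant ν.toSphere := fun ρ ↦ by
  have hcone (s : Set (sphere (0 : E) 1)) :
      Set.Ioo (0 : ℝ) 1 • ((↑) '' (sphereHomeomorph ρ ⁻¹' s)) =
        ρ ⁻¹' (Set.Ioo (0 : ℝ) 1 • ((↑) '' s) : Set E) := by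
    ext x
    simp only [Set.mem_smul, Set.mem_image, Set.mem_preimage]
    constructor
    · rintro ⟨r, hr, _, ⟨θ, hθ, rfl⟩, rfl⟩
      exact ⟨r, hr, _, ⟨sphereHomeomorph ρ θ, hθ, rfl⟩, (ρ.map_smul r θ).symm⟩
    · rintro ⟨r, hr, _, ⟨θ, hθ, rfl⟩, hx⟩
      refine ⟨r, hr, _, ⟨(sphereHomeomorph ρ).symm θ, by simpa using hθ, rfl⟩, ρ.injective ?_⟩
      rw [ρ.map_smul, ← hx, ← coe_sphereHomeomorph, Homeomorph.apply_symm_apply]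
  refine ⟨(sphereHomeomorph ρ).measurable, Measure.ext fun s hs ↦ ?_⟩
  rw [Measure.map_apply (sphereHomeomorph ρ).measurable hs, Measure.toSphere_apply' _ hs,
    Measure.toSphere_apply' _ ((sphereHomeomorph ρ).measurable hs), hcone,
    (hν ρ).measure_preimage_emb ρ.toHomeomorph.measurableEmbedding]

/-- The moments of `⟪u, θ⟫` under `μ` weighted by `exp (t * ⟪u, θ⟫)`: the partition function of the
posterior for `k = 0`, and its `k`-th derivative in `t` in general. -/
noncomputable def axialMoment (μ : Measure (sphere (0 : E) 1)) (u : E) (k : ℕ) (t : ℝ) : ℝ :=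
  ∫ θ, inner ℝ u (θ : E) ^ k * exp (t * inner ℝ u (θ : E)) ∂μ

section AxialMoment

variable [FiniteDimensional ℝ E] {μ : Measure (sphere (0 : E) 1)} [IsFiniteMeasure μ]

lemma hasDerivAt_axialMoment (u : E) (k : ℕ) (t : ℝ) :
    HasDerivAt (axialMoment μ u k) (axialMoment μ u (k + 1) t) t := by
  refine hasDerivAt_integral_of_continuous_compactSpace μ
    (F := fun t θ ↦ inner ℝ u (θ : E) ^ k * exp (t * inner ℝ u (θ : E)))
    (F' := fun t θ ↦ inner ℝ u (θ : E) ^ (k + 1) * exp (t * inner ℝ u (θ : E)))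
    (by fun_prop) (by fun_prop) (fun s θ ↦ ?_) t
  convert! (hasDerivAt_mul_const (x := s) (inner ℝ u (θ : E))).exp.const_mul
    (inner ℝ u (θ : E) ^ k) using 1
  ring

lemma axialMoment_zero_pos [NeZero μ] (u : E) (t : ℝ) : 0 < axialMoment μ u 0 t := by
  simp only [axialMoment, pow_zero, one_mul]
  exact integral_exp_pos (integrable_of_continuous_compactSpace μ (by fun_prop))

end AxialMoment

namespace IsIsometryInvariant

variable {μ : Measure (sphere (0 : E) 1)}

lemma integral_inner_mul_comp_inner_eq_zero (hμ : IsIsometryInvariant μ) {v w : E}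
    (hvw : inner ℝ v w = 0) (g : ℝ → ℝ) :
    ∫ θ, inner ℝ w (θ : E) * g (inner ℝ v (θ : E)) ∂μ = 0 := by
  set ρ := (ℝ ∙ w)ᗮ.reflection
  have hρw (x : E) : inner ℝ w (ρ x) = -inner ℝ w x := by
    rw [← ρ.inner_map_map w x, Submodule.reflection_orthogonalComplement_singleton_eq_neg,
      inner_neg_left, neg_neg]
  have hρv (x : E) : inner ℝ v (ρ x) = inner ℝ v x := by
    rw [← ρ.inner_map_map v x, Submodule.reflection_mem_subspace_eq_self
      (Submodule.mem_orthogonal_singleton_iff_inner_left.2 hvw)]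
  have hreflect := (hμ ρ).integral_comp (sphereHomeomorph ρ).measurableEmbedding
    fun θ ↦ inner ℝ w (θ : E) * g (inner ℝ v (θ : E))
  simp only [coe_sphereHomeomorph, hρw, hρv, neg_mul, integral_neg] at hreflect
  linarith

variable [FiniteDimensional ℝ E] [IsFiniteMeasure μ]

lemma integral_comp_inner_smul (hμ : IsIsometryInvariant μ) {u : E} (hu : ‖u‖ = 1) {g : ℝ → ℝ}
    (hg : Continuous g) :
    ∫ θ, g (inner ℝ u (θ : E)) • (θ : E) ∂μ =
      (∫ θ, inner ℝ u (θ : E) * g (inner ℝ u (θ : E)) ∂μ) • u := by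
  refine ext_inner_left ℝ fun w ↦ ?_
  set v := w - inner ℝ w u • u with hv
  have hortho : inner ℝ u v = 0 := by
    rw [hv, inner_sub_right, inner_smul_right, real_inner_self_eq_norm_sq, hu, real_inner_comm]
    ring
  calc
    inner ℝ w (∫ θ, g (inner ℝ u (θ : E)) • (θ : E) ∂μ)
      = ∫ θ, inner ℝ w (g (inner ℝ u (θ : E)) • (θ : E)) ∂μ :=
        (integral_inner (integrable_of_continuous_compactSpace μ (by fun_prop)) w).symm
    _ = ∫ θ, (inner ℝ v (θ : E) * g (inner ℝ u (θ : E)) +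
          inner ℝ w u * (inner ℝ u (θ : E) * g (inner ℝ u (θ : E)))) ∂μ := by
        congr with θ
        rw [hv, inner_sub_left, inner_smul_right, real_inner_smul_left]
        ring
    _ = inner ℝ w u * ∫ θ, inner ℝ u (θ : E) * g (inner ℝ u (θ : E)) ∂μ := by
        rw [integral_add (integrable_of_continuous_compactSpace μ (by fun_prop))
          (integrable_of_continuous_compactSpace μ (by fun_prop)),
          hμ.integral_inner_mul_comp_inner_eq_zero hortho, zero_add, integral_const_mul]
    _ = inner ℝ w ((∫ θ, inner ℝ u (θ : E) * g (inner ℝ u (θ : E)) ∂μ) • u) := by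
        rw [inner_smul_right, mul_comm]

-- Rotate `t • u` towards `w`: the integral of `⟪t • w - s • u, θ⟫ * exp ⟪t • u + s • w, θ⟫`
-- vanishes for every `s`, and so does its derivative at `s = 0`.
lemma axialMoment_one_eq_mul_integral (hμ : IsIsometryInvariant μ) {u w : E} (hnorm : ‖u‖ = ‖w‖)
    (huw : inner ℝ u w = 0) (t : ℝ) :
    axialMoment μ u 1 t =
      t * ∫ θ, inner ℝ w (θ : E) ^ 2 * exp (t * inner ℝ u (θ : E)) ∂μ := by
  have hvanish (s : ℝ) :
      ∫ θ, inner ℝ (t • w - s • u) (θ : E) * exp (inner ℝ (t • u + s • w) (θ : E)) ∂μ = 0 := by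
    refine hμ.integral_inner_mul_comp_inner_eq_zero ?_ exp
    simp only [inner_add_left, inner_sub_right, inner_smul_right, real_inner_self_eq_norm_sq,
      real_inner_comm, huw, hnorm]
    ring
  have hderiv := hasDerivAt_integral_of_continuous_compactSpace μ
    (F := fun s θ ↦ inner ℝ (t • w - s • u) (θ : E) * exp (inner ℝ (t • u + s • w) (θ : E)))
    (F' := fun s θ ↦ (inner ℝ (t • w - s • u) (θ : E) * inner ℝ w (θ : E) - inner ℝ u (θ : E)) *
      exp (inner ℝ (t • u + s • w) (θ : E)))
    (by fun_prop) (by fun_prop) (fun s θ ↦ by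
      simp only [inner_add_left, inner_sub_left, real_inner_smul_left]
      convert! ((hasDerivAt_mul_const (x := s) (inner ℝ u (θ : E))).const_sub
        (t * inner ℝ w (θ : E))).mul ((hasDerivAt_mul_const (x := s) (inner ℝ w (θ : E))).const_add
        (t * inner ℝ u (θ : E))).exp using 1
      ring) 0
  simp only [hvanish] at hderiv
  have hzero : ∫ θ, (t * (inner ℝ w (θ : E) ^ 2 * exp (t * inner ℝ u (θ : E))) -
      inner ℝ u (θ : E) ^ 1 * exp (t * inner ℝ u (θ : E))) ∂μ = 0 := by
    convert hderiv.unique (hasDerivAt_const 0 0) using 3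
    simp only [zero_smul, sub_zero, add_zero, real_inner_smul_left]
    ring
  rw [integral_sub (integrable_of_continuous_compactSpace μ (by fun_prop))
    (integrable_of_continuous_compactSpace μ (by fun_prop)), integral_const_mul] at hzero
  exact (sub_eq_zero.1 hzero).symm

lemma finrank_sub_one_mul_axialMoment_one (hμ : IsIsometryInvariant μ) {u : E} (hu : ‖u‖ = 1)
    (t : ℝ) :
    (Module.finrank ℝ E - 1) * axialMoment μ u 1 t =
      t * (axialMoment μ u 0 t - axialMoment μ u 2 t) := by
  obtain ⟨i, b, hi⟩ := exists_orthonormalBasis_apply_eq hu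
  have hsum (θ : sphere (0 : E) 1) :
      ∑ j ∈ Finset.univ.erase i, inner ℝ (b j) (θ : E) ^ 2 = 1 - inner ℝ u (θ : E) ^ 2 := by
    rw [eq_sub_iff_add_eq, ← hi, Finset.sum_erase_add _ _ (Finset.mem_univ i),
      b.sum_sq_inner_right, norm_eq_of_mem_sphere, one_pow]
  calc
    (Module.finrank ℝ E - 1) * axialMoment μ u 1 t
      = ∑ _j ∈ Finset.univ.erase i, axialMoment μ u 1 t := by
        have hpos : 1 ≤ Module.finrank ℝ E := Fin.pos i
        simp [Finset.card_erase_of_mem, Nat.cast_sub hpos]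
    _ = ∑ j ∈ Finset.univ.erase i,
          t * ∫ θ, inner ℝ (b j) (θ : E) ^ 2 * exp (t * inner ℝ u (θ : E)) ∂μ :=
        Finset.sum_congr rfl fun j hj ↦ hμ.axialMoment_one_eq_mul_integral
          (hu.trans (b.norm_eq_one j).symm)
          (hi ▸ b.inner_eq_zero (Finset.ne_of_mem_erase hj).symm) t
    _ = t * ∫ θ, (1 - inner ℝ u (θ : E) ^ 2) * exp (t * inner ℝ u (θ : E)) ∂μ := by
        rw [← Finset.mul_sum, ← integral_finsetSum _ fun j _ ↦
          integrable_of_continuous_compactSpace μ (by fun_prop)]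
        simp only [← Finset.sum_mul, hsum]
    _ = t * (axialMoment μ u 0 t - axialMoment μ u 2 t) := by
        simp only [axialMoment, pow_zero, sub_mul]
        rw [integral_sub (integrable_of_continuous_compactSpace μ (by fun_prop))
          (integrable_of_continuous_compactSpace μ (by fun_prop))]

-- The two sides differ by the Wronskian of `fun t ↦ t * axialMoment μ u 0 t` and `sinh`.
lemma axialMoment_zero_add_mul_one_mul_sinh (hμ : IsIsometryInvariant μ)
    (hE : Module.finrank ℝ E = 3) {u : E} (hu : ‖u‖ = 1) (t : ℝ) :
    (axialMoment μ u 0 t + t * axialMoment μ u 1 t) * sinh t =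
      t * axialMoment μ u 0 t * cosh t := by
  set W := fun s ↦ (axialMoment μ u 0 s + s * axialMoment μ u 1 s) * sinh s -
    s * axialMoment μ u 0 s * cosh s
  have hW (s : ℝ) : HasDerivAt W 0 s := by
    have h0 := hasDerivAt_axialMoment (μ := μ) u 0 s
    have h1 := hasDerivAt_axialMoment (μ := μ) u 1 s
    have hode := hμ.finrank_sub_one_mul_axialMoment_one hu s
    rw [hE] at hode
    convert! ((h0.add ((hasDerivAt_id s).mul h1)).mul (hasDerivAt_sinh s)).sub
      (((hasDerivAt_id s).mul h0).mul (hasDerivAt_cosh s)) using 1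
    simp only [id_eq, Pi.add_apply, Pi.mul_apply]
    push_cast at hode
    linear_combination -sinh s * hode
  have hconst := is_const_of_deriv_eq_zero (fun s ↦ (hW s).differentiableAt)
    (fun s ↦ (hW s).deriv) t 0
  simpa [W, sub_eq_zero] using hconst

lemma axialMoment_one_eq (hμ : IsIsometryInvariant μ) (hE : Module.finrank ℝ E = 3)
    {u : E} (hu : ‖u‖ = 1) {t : ℝ} (ht : t ≠ 0) :
    axialMoment μ u 1 t = (cosh t / sinh t - 1 / t) * axialMoment μ u 0 t := by
  have hsinh : sinh t ≠ 0 := sinh_ne_zero.2 ht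
  field_simp
  linear_combination hμ.axialMoment_zero_add_mul_one_mul_sinh hE hu t

lemma inv_integral_smul_integral_exp_inner_smul (hμ : IsIsometryInvariant μ)
    [NeZero μ] (hE : Module.finrank ℝ E = 3) {u : E} (hu : ‖u‖ = 1) {t : ℝ} (ht : t ≠ 0) :
    (∫ θ, exp (t * inner ℝ u (θ : E)) ∂μ)⁻¹ • (∫ θ, exp (t * inner ℝ u (θ : E)) • (θ : E) ∂μ) =
      (cosh t / sinh t - 1 / t) • u := by
  have hmoment := hμ.axialMoment_one_eq hE hu ht
  have hpos := axialMoment_zero_pos (μ := μ) u t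
  simp only [axialMoment, pow_zero, one_mul, pow_one] at hmoment hpos
  rw [hμ.integral_comp_inner_smul hu (g := fun s ↦ exp (t * s)) (by fun_prop), hmoment, smul_smul,
    mul_comm, mul_inv_cancel_right₀ hpos.ne']

end IsIsometryInvariant

theorem stmt7_general (hE : Module.finrank ℝ E = 3) {μ : Measure (sphere (0 : E) 1)}
    [IsFiniteMeasure μ] [NeZero μ] (hμ : IsIsometryInvariant μ) {c R : ℝ} (hc : c ≠ 0)
    (hR : R ≠ 0) {y : E} (hy : y ≠ 0) :
    (∫ θ, c * exp (-‖y - R • (θ : E)‖ ^ 2 / 2) ∂μ)⁻¹ •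
        (∫ θ, (c * exp (-‖y - R • (θ : E)‖ ^ 2 / 2)) • (R • (θ : E)) ∂μ) =
      (R * (cosh (R * ‖y‖) / sinh (R * ‖y‖) - 1 / (R * ‖y‖))) • (‖y‖⁻¹ • y) := by
  have : FiniteDimensional ℝ E := Module.finite_of_finrank_pos (by lia)
  set u := ‖y‖⁻¹ • y with hu
  set t := R * ‖y‖ with ht
  have hu1 : ‖u‖ = 1 := norm_smul_inv_norm hy
  have ht0 : t ≠ 0 := mul_ne_zero hR (norm_ne_zero_iff.2 hy)
  have htu : R • y = t • u := by rw [ht, mul_smul, hu, smul_inv_smul₀ (norm_ne_zero_iff.2 hy)]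
  obtain ⟨K, hK, hweight⟩ : ∃ K ≠ 0, ∀ θ : sphere (0 : E) 1,
      c * exp (-‖y - R • (θ : E)‖ ^ 2 / 2) = K * exp (t * inner ℝ u (θ : E)) := by
    refine ⟨c * exp (-(‖y‖ ^ 2 + R ^ 2) / 2), mul_ne_zero hc (exp_ne_zero _), fun θ ↦ ?_⟩
    rw [exp_neg_norm_sub_sq_div_two, norm_smul, norm_eq_of_mem_sphere, mul_one, norm_eq_abs, sq_abs,
      real_inner_smul_right, ← real_inner_smul_left, htu, real_inner_smul_left, ← mul_assoc]
  simp only [hweight, smul_comm _ R, mul_smul, integral_smul, integral_const_mul]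
  rw [← hμ.inv_integral_smul_integral_exp_inner_smul hE hu1 ht0, mul_inv,
    ← smul_eq_mul K⁻¹, smul_assoc, smul_comm _ K, inv_smul_smul₀ hK]

instance : IsProbabilityMeasure unifSphere2 :=
  have : NeZero (volume : Measure (EuclideanSpace ℝ (Fin 3))).toSphere :=
    ⟨Measure.toSphere_ne_zero _⟩
  isProbabilityMeasureSMul

lemma isIsometryInvariant_unifSphere2 : IsIsometryInvariant unifSphere2 :=
  (isIsometryInvariant_toSphere fun ρ ↦ ρ.measurePreserving).smul_measure _

/-- For `R > 0` and `0 ≠ y ∈ ℝ³`, the posterior mean of the uniform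
distribution on the sphere of radius `R` under Gaussian observation satisfies
`(∫_{S²} (Rθ) φ₃(y-Rθ) dσ̄₂) / (∫_{S²} φ₃(y-Rθ) dσ̄₂)
  = R (y/‖y‖) (coth(R‖y‖) - 1/(R‖y‖))`, with `coth x = cosh x / sinh x`. -/
theorem stmt7 (R : ℝ) (hR : 0 < R) (y : EuclideanSpace ℝ (Fin 3)) (hy : y ≠ 0) :
    (∫ θ : Metric.sphere (0 : EuclideanSpace ℝ (Fin 3)) 1,
          gaussDensity3 (y - R • (θ : EuclideanSpace ℝ (Fin 3))) ∂unifSphere2)⁻¹ •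
        (∫ θ : Metric.sphere (0 : EuclideanSpace ℝ (Fin 3)) 1,
          gaussDensity3 (y - R • (θ : EuclideanSpace ℝ (Fin 3))) •
            (R • (θ : EuclideanSpace ℝ (Fin 3))) ∂unifSphere2) =
      (R * (Real.cosh (R * ‖y‖) / Real.sinh (R * ‖y‖) - 1 / (R * ‖y‖))) •
        (‖y‖⁻¹ • y) := by
  have hc : (2 * Real.pi) ^ (-(3 : ℝ) / 2) ≠ 0 := by positivity
  exact stmt7_general finrank_euclideanSpace_fin isIsometryInvariant_unifSphere2 hc hR.ne' hy
end

section
/- Let R > 0, let X be a real random variable uniform on {−R, R}, and let Z be a standard Gaussian real random variable independent of X; set Y = X + Z. Then the Kullback–Leibler divergence of the joint law of (X, Y) from the product of the marginal laws of X and Y (i.e., the mutual information I(X;Y) in nats) equals R² − ∫_ℝ log( cosh(R(R+z)) ) (2π)^{−1/2} e^{−z²/2} dz. -/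
open MeasureTheory Real
open scoped Classical

/-- The Kullback–Leibler divergence `KL(μ ‖ ν)` in nats, valued in `ℝ≥0∞`:
it equals `∫ log(dμ/dν) dμ` when `μ ≪ ν` and the log-likelihood ratio is
`μ`-integrable, and `∞` otherwise. -/
noncomputable def klDiv {α : Type*} [MeasurableSpace α] (μ ν : Measure α) : ENNReal :=
  if μ ≪ ν ∧ Integrable (llr μ ν) μ then ENNReal.ofReal (∫ x, llr μ ν x ∂μ) else ⊤

open ProbabilityTheory
open scoped ENNReal NNReal

/-! Let the noise `Z` have variance `v`. Given `X = a` with `a = ±R`, the output `Y` has law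
`N(a, v)`, the exponential tilt of `N(0, v)` by `a y / v`. The two tilts have the same normalising
constant, so their equal mixture, the law of `Y`, has density proportional to `cosh (R y / v)` with
respect to `N(0, v)`, and the joint law has density `exp (x y / v) / cosh (R y / v)` with respect to
the product of the marginals. The mutual information is therefore
`𝔼[X Y / v] - 𝔼[log (cosh (R Y / v))]`. The first term is `R² / v`; in the second, the integrand is
even, so both components of the mixture contribute equally. -/

section KLDivergence

variable {α : Type*} [MeasurableSpace α] {ν : Measure α} [SigmaFinite ν] {f : α → ℝ≥0∞}

theorem llr_withDensity_ae_eq (hf : AEMeasurable f ν) :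
    llr (ν.withDensity f) ν =ᵐ[ν.withDensity f] fun x => log (f x).toReal := by
  filter_upwards [(withDensity_absolutelyContinuous ν f).ae_le (Measure.rnDeriv_withDensity₀ ν hf)]
    with x hx
  rw [llr, hx]

theorem klDiv_withDensity (hf : AEMeasurable f ν)
    (hlog : Integrable (fun x => log (f x).toReal) (ν.withDensity f)) :
    klDiv (ν.withDensity f) ν =
      ENNReal.ofReal (∫ x, log (f x).toReal ∂ν.withDensity f) := by
  have hllr := llr_withDensity_ae_eq hf
  rw [klDiv, if_pos ⟨withDensity_absolutelyContinuous ν f, hlog.congr hllr.symm⟩,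
    integral_congr_ae hllr]

end KLDivergence

section EqualMixture

variable {α β : Type*} [MeasurableSpace α] [MeasurableSpace β]

/-- The mixture of two measures with weight `1 / 2` each: the law of a sample drawn from one of the
two according to a fair coin. -/
noncomputable def equalMixture (μ ν : Measure α) : Measure α :=
  (1 / 2 : ℝ≥0∞) • μ + (1 / 2 : ℝ≥0∞) • ν

instance (μ ν : Measure α) [IsProbabilityMeasure μ] [IsProbabilityMeasure ν] :
    IsProbabilityMeasure (equalMixture μ ν) :=
  ⟨by simp [equalMixture, ENNReal.inv_two_add_inv_two]⟩

theorem equalMixture_comm (μ ν : Measure α) : equalMixture μ ν = equalMixture ν μ :=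
  add_comm _ _

theorem map_equalMixture (μ ν : Measure α) {f : α → β} (hf : Measurable f) :
    (equalMixture μ ν).map f = equalMixture (μ.map f) (ν.map f) := by
  simp only [equalMixture, Measure.map_add _ _ hf, Measure.map_smul]

theorem equalMixture_prod (μ ν : Measure α) [SFinite μ] [SFinite ν] (ρ : Measure β) [SFinite ρ] :
    (equalMixture μ ν).prod ρ = equalMixture (μ.prod ρ) (ν.prod ρ) := by
  simp only [equalMixture, Measure.add_prod, Measure.prod_smul_left]

theorem withDensity_equalMixture (μ ν : Measure α) (f : α → ℝ≥0∞) :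
    (equalMixture μ ν).withDensity f = equalMixture (μ.withDensity f) (ν.withDensity f) := by
  simp only [equalMixture, withDensity_add_measure, withDensity_smul_measure]

theorem equalMixture_withDensity (μ : Measure α) {f g : α → ℝ≥0∞} (hf : Measurable f)
    (hg : Measurable g) :
    equalMixture (μ.withDensity f) (μ.withDensity g) =
      μ.withDensity fun x => (f x + g x) / 2 := by
  rw [equalMixture, ← withDensity_smul _ hf, ← withDensity_smul _ hg,
    ← withDensity_add_left (hf.const_smul _)]
  congr 1 with x
  simp only [Pi.add_apply, Pi.smul_apply, smul_eq_mul, ENNReal.div_eq_inv_mul, mul_one, mul_add]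

theorem integrable_equalMixture {E : Type*} [NormedAddCommGroup E] {μ ν : Measure α} {f : α → E}
    (hμ : Integrable f μ) (hν : Integrable f ν) : Integrable f (equalMixture μ ν) :=
  (hμ.smul_measure (by simp)).add_measure (hν.smul_measure (by simp))

theorem integral_equalMixture {E : Type*} [NormedAddCommGroup E] [NormedSpace ℝ E]
    {μ ν : Measure α} {f : α → E} (hμ : Integrable f μ) (hν : Integrable f ν) :
    ∫ x, f x ∂equalMixture μ ν = (1 / 2 : ℝ) • (∫ x, f x ∂μ + ∫ x, f x ∂ν) := by
  rw [equalMixture, integral_add_measure (hμ.smul_measure (by simp)) (hν.smul_measure (by simp)),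
    integral_smul_measure, integral_smul_measure, smul_add]
  simp

end EqualMixture

section DiracProd

variable {α β : Type*} [MeasurableSpace α] [MeasurableSpace β]

theorem withDensity_dirac_prod (a : α) (ρ : Measure β) [SFinite ρ] {f : α × β → ℝ≥0∞}
    (hf : Measurable f) :
    ((Measure.dirac a).prod ρ).withDensity f =
      (Measure.dirac a).prod (ρ.withDensity fun y => f (a, y)) := by
  have ha : Measurable (Prod.mk a : β → α × β) := measurable_prodMk_left
  ext s hs
  rw [Measure.dirac_prod, Measure.dirac_prod, withDensity_apply _ hs, Measure.map_apply ha hs,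
    withDensity_apply _ (ha hs), Measure.restrict_map ha hs, lintegral_map hf ha]

theorem withDensity_equalMixture_dirac_prod (a b : α) (ρ : Measure β) [SFinite ρ]
    {f : α × β → ℝ≥0∞} (hf : Measurable f) :
    ((equalMixture (Measure.dirac a) (Measure.dirac b)).prod ρ).withDensity f =
      equalMixture ((Measure.dirac a).prod (ρ.withDensity fun y => f (a, y)))
        ((Measure.dirac b).prod (ρ.withDensity fun y => f (b, y))) := by
  rw [equalMixture_prod, withDensity_equalMixture, withDensity_dirac_prod a ρ hf,
    withDensity_dirac_prod b ρ hf]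

variable {M : Type*} [Add M] [MeasurableSpace M] [MeasurableAdd₂ M]

theorem map_dirac_prod_prodMk_add (a : M) (ρ : Measure M) [SFinite ρ] :
    ((Measure.dirac a).prod ρ).map (fun p => (p.1, p.1 + p.2)) =
      (Measure.dirac a).prod (ρ.map (a + ·)) := by
  rw [Measure.dirac_prod, Measure.dirac_prod, Measure.map_map (by fun_prop) (by fun_prop),
    Measure.map_map (by fun_prop) (by fun_prop)]
  rfl

theorem map_prodMk_add_eq_equalMixture {Ω : Type*} [MeasurableSpace Ω] {P : Measure Ω}
    [IsFiniteMeasure P] {X Z : Ω → M} (hX : AEMeasurable X P) (hZ : AEMeasurable Z P)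
    (hindep : IndepFun X Z P) {a b : M}
    (hXlaw : P.map X = equalMixture (Measure.dirac a) (Measure.dirac b)) :
    P.map (fun ω => (X ω, X ω + Z ω)) =
      equalMixture ((Measure.dirac a).prod ((P.map Z).map (a + ·)))
        ((Measure.dirac b).prod ((P.map Z).map (b + ·))) := by
  have hadd : Measurable fun p : M × M => (p.1, p.1 + p.2) := by fun_prop
  calc P.map (fun ω => (X ω, X ω + Z ω))
      = (P.map fun ω => (X ω, Z ω)).map fun p => (p.1, p.1 + p.2) :=
        (AEMeasurable.map_map_of_aemeasurable hadd.aemeasurable (hX.prodMk hZ)).symm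
    _ = ((equalMixture (Measure.dirac a) (Measure.dirac b)).prod (P.map Z)).map
          fun p => (p.1, p.1 + p.2) := by
        rw [hindep.map_prod_eq_prod_map_map hX hZ, hXlaw]
    _ = _ := by
        rw [equalMixture_prod, map_equalMixture _ _ hadd, map_dirac_prod_prodMk_add,
          map_dirac_prod_prodMk_add]

end DiracProd

section Tilted

variable {α : Type*} [MeasurableSpace α] {μ : Measure α} {f : α → ℝ}

theorem equalMixture_tilted_neg (hf : Measurable f)
    (hneg : ∫ x, exp (-f x) ∂μ = ∫ x, exp (f x) ∂μ) :
    equalMixture (μ.tilted fun x => -f x) (μ.tilted f) =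
      μ.withDensity fun x => ENNReal.ofReal (cosh (f x) / ∫ x, exp (f x) ∂μ) := by
  have : 0 ≤ ∫ x, exp (f x) ∂μ := integral_nonneg fun x => (exp_pos _).le
  rw [Measure.tilted, Measure.tilted, hneg, equalMixture_withDensity _ (by fun_prop) (by fun_prop)]
  congr 1 with x
  rw [← ENNReal.ofReal_add (by positivity) (by positivity), ← ENNReal.ofReal_ofNat 2,
    ← ENNReal.ofReal_div_of_pos two_pos, cosh_eq]
  ring_nf

theorem withDensity_equalMixture_tilted_neg (hf : Measurable f)
    (hneg : ∫ x, exp (-f x) ∂μ = ∫ x, exp (f x) ∂μ) :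
    (equalMixture (μ.tilted fun x => -f x) (μ.tilted f)).withDensity
      (fun x => ENNReal.ofReal (exp (f x) / cosh (f x))) = μ.tilted f := by
  have : 0 ≤ ∫ x, exp (f x) ∂μ := integral_nonneg fun x => (exp_pos _).le
  rw [equalMixture_tilted_neg hf hneg, ← withDensity_mul _ (by fun_prop) (by fun_prop),
    Measure.tilted]
  congr 1 with x
  have := cosh_pos (f x)
  rw [Pi.mul_apply, ← ENNReal.ofReal_mul (by positivity)]
  congr 1
  field_simp

end Tilted

section Gaussian

variable {E : Type*} [NormedAddCommGroup E] [NormedSpace ℝ E]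

theorem tilted_mul_gaussianReal (m : ℝ) {v : ℝ≥0} (hv : v ≠ 0) (t : ℝ) :
    (gaussianReal m v).tilted (fun y => t * y) = gaussianReal (m + v * t) v := by
  have hnorm : ∫ y, exp (t * y) ∂gaussianReal m v = exp (m * t + v * t ^ 2 / 2) :=
    congrFun mgf_fun_id_gaussianReal t
  rw [Measure.tilted, hnorm, gaussianReal_of_var_ne_zero _ hv, gaussianReal_of_var_ne_zero _ hv,
    ← withDensity_mul _ (by fun_prop) (by fun_prop)]
  congr 1 with y
  rw [Pi.mul_apply, gaussianPDF, gaussianPDF, ← ENNReal.ofReal_mul (gaussianPDFReal_nonneg _ _ _),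
    gaussianPDFReal, gaussianPDFReal, mul_assoc, ← exp_sub, ← exp_add]
  congr 3
  have : (v : ℝ) ≠ 0 := NNReal.coe_ne_zero.mpr hv
  field_simp
  ring

theorem withDensity_equalMixture_gaussianReal (a : ℝ) {v : ℝ≥0} (hv : v ≠ 0) :
    (equalMixture (gaussianReal (-a) v) (gaussianReal a v)).withDensity
      (fun y => ENNReal.ofReal (exp (a * y / v) / cosh (a * y / v))) = gaussianReal a v := by
  have hv' : (v : ℝ) ≠ 0 := NNReal.coe_ne_zero.mpr hv
  have htilt (b : ℝ) : (gaussianReal 0 v).tilted (fun y => b * y / v) = gaussianReal b v := by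
    simpa only [div_mul_eq_mul_div, zero_add, mul_div_cancel₀ b hv'] using
      tilted_mul_gaussianReal 0 hv (b / v)
  have hmgf (t : ℝ) : ∫ y, exp (t * y) ∂gaussianReal 0 v = exp (v * t ^ 2 / 2) := by
    simpa [mgf] using congrFun (mgf_fun_id_gaussianReal (μ := 0) (v := v)) t
  have hneg : ∫ y, exp (-(a * y / v)) ∂gaussianReal 0 v =
      ∫ y, exp (a * y / v) ∂gaussianReal 0 v := by
    simp only [← div_mul_eq_mul_div, ← neg_mul, hmgf, neg_sq]
  have := withDensity_equalMixture_tilted_neg (f := fun y => a * y / v) (by fun_prop) hneg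
  simpa only [← neg_div, ← neg_mul, htilt] using this

theorem integrable_id_gaussianReal (m : ℝ) (v : ℝ≥0) :
    Integrable (fun y => y) (gaussianReal m v) :=
  (memLp_id_gaussianReal 1).integrable le_rfl

theorem integral_gaussianReal_neg_of_even {f : ℝ → E} (hf : f.Even) (m : ℝ) (v : ℝ≥0) :
    ∫ y, f y ∂gaussianReal (-m) v = ∫ y, f y ∂gaussianReal m v := by
  rw [← gaussianReal_map_neg, measurableEmbedding_neg.integral_map]
  exact integral_congr_ae (.of_forall hf)

theorem integral_gaussianReal_eq_integral_const_add (f : ℝ → E) (m : ℝ) (v : ℝ≥0) :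
    ∫ y, f y ∂gaussianReal m v = ∫ z, f (m + z) ∂gaussianReal 0 v := by
  have hmap : (gaussianReal 0 v).map (m + ·) = gaussianReal m v := by
    rw [gaussianReal_map_const_add, zero_add]
  rw [← hmap, (measurableEmbedding_addLeft m).integral_map]

end Gaussian

theorem abs_log_cosh_le (t : ℝ) : |log (cosh t)| ≤ |t| := by
  rw [abs_of_nonneg (log_nonneg (one_le_cosh t)), log_le_iff_le_exp (cosh_pos t), ← cosh_abs,
    ← sinh_add_cosh]
  exact le_add_of_nonneg_left (sinh_nonneg_iff.mpr (abs_nonneg t))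

theorem integrable_log_cosh {α : Type*} [MeasurableSpace α] {μ : Measure α} {f : α → ℝ}
    (hf : Integrable f μ) : Integrable (fun x => log (cosh (f x))) μ :=
  hf.mono (measurable_log.comp_aemeasurable (by fun_prop)).aestronglyMeasurable
    (.of_forall fun x => abs_log_cosh_le (f x))

section BinaryGaussianChannel

/-- The density of the joint law of the input and the output of the binary Gaussian channel, with
input uniform on `{-R, R}` and noise of variance `v`, with respect to the product of its marginals;
see `withDensity_binaryGaussianDensity_prod`. -/
noncomputable def binaryGaussianDensity (R : ℝ) (v : ℝ≥0) (p : ℝ × ℝ) : ℝ≥0∞ :=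
  ENNReal.ofReal (exp (p.1 * p.2 / v) / cosh (R * p.2 / v))

theorem measurable_binaryGaussianDensity (R : ℝ) (v : ℝ≥0) :
    Measurable (binaryGaussianDensity R v) := by
  unfold binaryGaussianDensity
  fun_prop

theorem log_toReal_binaryGaussianDensity (R : ℝ) (v : ℝ≥0) (p : ℝ × ℝ) :
    log (binaryGaussianDensity R v p).toReal =
      p.1 * p.2 / v - log (cosh (R * p.2 / v)) := by
  have hcosh := cosh_pos (R * p.2 / v)
  rw [binaryGaussianDensity, ENNReal.toReal_ofReal (by positivity),
    log_div (exp_pos _).ne' hcosh.ne', log_exp]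

theorem withDensity_binaryGaussianDensity_prod (R : ℝ) {v : ℝ≥0} (hv : v ≠ 0) :
    ((equalMixture (Measure.dirac (-R)) (Measure.dirac R)).prod
        (equalMixture (gaussianReal (-R) v) (gaussianReal R v))).withDensity
      (binaryGaussianDensity R v) =
    equalMixture ((Measure.dirac (-R)).prod (gaussianReal (-R) v))
      ((Measure.dirac R).prod (gaussianReal R v)) := by
  have hpos := withDensity_equalMixture_gaussianReal R hv
  have hneg := withDensity_equalMixture_gaussianReal (-R) hv
  simp only [neg_neg, neg_mul, neg_div, cosh_neg, equalMixture_comm (gaussianReal R v)] at hneg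
  rw [withDensity_equalMixture_dirac_prod _ _ _ (measurable_binaryGaussianDensity R v)]
  simp only [binaryGaussianDensity, neg_mul, neg_div, hpos, hneg]

variable {ρ : Measure ℝ} [SFinite ρ]

theorem integrable_log_binaryGaussianDensity_dirac_prod (R : ℝ) (v : ℝ≥0) (a : ℝ)
    (hρ : Integrable (fun y => y) ρ) :
    Integrable (fun p => log (binaryGaussianDensity R v p).toReal) ((Measure.dirac a).prod ρ) := by
  simp only [log_toReal_binaryGaussianDensity, Measure.dirac_prod]
  rw [(measurableEmbedding_prodMk_left a).integrable_map_iff]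
  exact ((hρ.const_mul a).div_const v).sub (integrable_log_cosh ((hρ.const_mul R).div_const v))

theorem integral_log_binaryGaussianDensity_dirac_prod (R : ℝ) (v : ℝ≥0) (a : ℝ)
    (hρ : Integrable (fun y => y) ρ) :
    ∫ p, log (binaryGaussianDensity R v p).toReal ∂(Measure.dirac a).prod ρ =
      a * (∫ y, y ∂ρ) / v - ∫ y, log (cosh (R * y / v)) ∂ρ := by
  simp only [log_toReal_binaryGaussianDensity, Measure.dirac_prod]
  rw [(measurableEmbedding_prodMk_left a).integral_map,
    integral_sub ((hρ.const_mul a).div_const v)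
      (integrable_log_cosh ((hρ.const_mul R).div_const v)),
    integral_div, integral_const_mul]

theorem integral_log_binaryGaussianDensity_equalMixture (R : ℝ) (v : ℝ≥0) :
    ∫ p, log (binaryGaussianDensity R v p).toReal
        ∂equalMixture ((Measure.dirac (-R)).prod (gaussianReal (-R) v))
          ((Measure.dirac R).prod (gaussianReal R v)) =
      R ^ 2 / v - ∫ z, log (cosh (R * (R + z) / v)) ∂gaussianReal 0 v := by
  have heven : (fun y => log (cosh (R * y / v))).Even := fun y => by
    simp only [mul_neg, neg_div, cosh_neg]
  have hint (a : ℝ) :=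
    integrable_log_binaryGaussianDensity_dirac_prod R v a (integrable_id_gaussianReal a v)
  rw [integral_equalMixture (hint (-R)) (hint R),
    integral_log_binaryGaussianDensity_dirac_prod R v (-R) (integrable_id_gaussianReal (-R) v),
    integral_log_binaryGaussianDensity_dirac_prod R v R (integrable_id_gaussianReal R v),
    integral_id_gaussianReal, integral_id_gaussianReal, integral_gaussianReal_neg_of_even heven,
    integral_gaussianReal_eq_integral_const_add]
  simp only [smul_eq_mul]
  ring

variable {Ω : Type*} [MeasurableSpace Ω] {P : Measure Ω} [IsFiniteMeasure P] {X Z : Ω → ℝ}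

theorem map_prodMk_add_eq_equalMixture_gaussianReal {R : ℝ} {v : ℝ≥0} (hX : AEMeasurable X P)
    (hZ : AEMeasurable Z P)
    (hXlaw : P.map X = equalMixture (Measure.dirac (-R)) (Measure.dirac R))
    (hZlaw : P.map Z = gaussianReal 0 v) (hindep : IndepFun X Z P) :
    P.map (fun ω => (X ω, X ω + Z ω)) =
      equalMixture ((Measure.dirac (-R)).prod (gaussianReal (-R) v))
        ((Measure.dirac R).prod (gaussianReal R v)) := by
  simp only [map_prodMk_add_eq_equalMixture hX hZ hindep hXlaw, hZlaw,
    gaussianReal_map_const_add, zero_add]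

theorem map_add_eq_equalMixture_gaussianReal {R : ℝ} {v : ℝ≥0} (hX : AEMeasurable X P)
    (hZ : AEMeasurable Z P)
    (hXlaw : P.map X = equalMixture (Measure.dirac (-R)) (Measure.dirac R))
    (hZlaw : P.map Z = gaussianReal 0 v) (hindep : IndepFun X Z P) :
    P.map (fun ω => X ω + Z ω) = equalMixture (gaussianReal (-R) v) (gaussianReal R v) := by
  rw [← Measure.snd_map_prodMk₀ hX,
    map_prodMk_add_eq_equalMixture_gaussianReal hX hZ hXlaw hZlaw hindep, Measure.snd,
    map_equalMixture _ _ measurable_snd]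
  exact congrArg₂ equalMixture Measure.snd_prod Measure.snd_prod

end BinaryGaussianChannel

theorem integral_gaussianReal_zero_one (f : ℝ → ℝ) :
    ∫ z, f z ∂gaussianReal 0 1 =
      ∫ z, f z * ((2 * π) ^ (-(1 : ℝ) / 2) * exp (-z ^ 2 / 2)) := by
  have hconst : (√(2 * π))⁻¹ = (2 * π) ^ (-(1 : ℝ) / 2) := by
    rw [neg_div, rpow_neg two_pi_pos.le, ← sqrt_eq_rpow]
  rw [integral_gaussianReal_eq_integral_smul one_ne_zero]
  simp only [gaussianPDFReal, NNReal.coe_one, mul_one, sub_zero, hconst, smul_eq_mul]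
  exact integral_congr_ae (.of_forall fun z => mul_comm _ _)

theorem stmt9_general (R : ℝ) {v : ℝ≥0} (hv : v ≠ 0)
    {Ω : Type*} [MeasurableSpace Ω] (P : Measure Ω) [IsFiniteMeasure P]
    (X Z : Ω → ℝ) (hX : AEMeasurable X P) (hZ : AEMeasurable Z P)
    (hXlaw : P.map X = equalMixture (Measure.dirac (-R)) (Measure.dirac R))
    (hZlaw : P.map Z = gaussianReal 0 v) (hindep : IndepFun X Z P)
    (Y : Ω → ℝ) (hY : ∀ ω, Y ω = X ω + Z ω) :
    klDiv (P.map fun ω => (X ω, Y ω)) ((P.map X).prod (P.map Y)) =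
      ENNReal.ofReal
        (R ^ 2 / v - ∫ z, log (cosh (R * (R + z) / v)) ∂gaussianReal 0 v) := by
  obtain rfl : Y = fun ω => X ω + Z ω := funext hY
  have hdensity := withDensity_binaryGaussianDensity_prod R hv
  have hint (a : ℝ) :=
    integrable_log_binaryGaussianDensity_dirac_prod R v a (integrable_id_gaussianReal a v)
  rw [map_prodMk_add_eq_equalMixture_gaussianReal hX hZ hXlaw hZlaw hindep, hXlaw,
    map_add_eq_equalMixture_gaussianReal hX hZ hXlaw hZlaw hindep, ← hdensity,
    klDiv_withDensity (measurable_binaryGaussianDensity R v).aemeasurable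
      (hdensity ▸ integrable_equalMixture (hint (-R)) (hint R)),
    hdensity, integral_log_binaryGaussianDensity_equalMixture]

/-- Let `R > 0`, `X` uniform on `{-R, R}`, `Z ~ N(0,1)` independent of `X`,
`Y = X + Z`.  Then the mutual information `I(X;Y)`, i.e. the KL divergence of the joint law
of `(X, Y)` from the product of the marginals, equals (in nats)
`R² - ∫ log(cosh(R(R+z))) (2π)^{-1/2} e^{-z²/2} dz`. -/
theorem stmt9 (R : ℝ) (hR : 0 < R)
    {Ω : Type*} [mΩ : MeasurableSpace Ω] (P : Measure Ω) [IsProbabilityMeasure P]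
    (X Z : Ω → ℝ) (hX : Measurable X) (hZ : Measurable Z)
    (hXlaw : Measure.map X P =
      (1 / 2 : ENNReal) • Measure.dirac (-R) + (1 / 2 : ENNReal) • Measure.dirac R)
    (hZlaw : Measure.map Z P = ProbabilityTheory.gaussianReal 0 1)
    (hindep : ProbabilityTheory.IndepFun X Z P)
    (Y : Ω → ℝ) (hY : ∀ ω, Y ω = X ω + Z ω) :
    klDiv (Measure.map (fun ω => (X ω, Y ω)) P)
        ((Measure.map X P).prod (Measure.map Y P)) =
      ENNReal.ofReal (R ^ 2 - ∫ z : ℝ,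
        Real.log (Real.cosh (R * (R + z))) *
          ((2 * Real.pi) ^ (-(1 : ℝ) / 2) * Real.exp (-z ^ 2 / 2))) := by
  simpa only [NNReal.coe_one, div_one, integral_gaussianReal_zero_one] using
    stmt9_general R one_ne_zero P X Z hX.aemeasurable hZ.aemeasurable hXlaw hZlaw hindep Y hY
end

section
/- For every a > 0, the function u ↦ u / (a + √(a² + u))² is concave on [0, ∞) (and is nondecreasing there). -/
open Real

/-!
Put `s = √(a² + u)`. Then `u = (s - a)(s + a)`, so the function is the composition of `u ↦ s` with
the Möbius map `s ↦ (s - a) / (s + a) = 1 - 2a / (s + a)`. The former is concave and increasing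
from `[-a², ∞)` onto `[0, ∞)`; for `a > 0` the latter is concave and increasing on `(-a, ∞)`. Hence
the composition is concave and increasing on `[-a², ∞)`.
-/

section Moebius

variable {𝕜 : Type*} [Field 𝕜]

lemma sub_div_add_eq_one_sub {a s : 𝕜} (h : s + a ≠ 0) :
    (s - a) / (s + a) = 1 - 2 * a * (s + a)⁻¹ := by
  field_simp
  ring

variable [LinearOrder 𝕜] [IsStrictOrderedRing 𝕜] {a : 𝕜}

lemma concaveOn_sub_div_add (ha : 0 ≤ a) :
    ConcaveOn 𝕜 (Set.Ioi (-a)) fun s => (s - a) / (s + a) := by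
  have h_inv : ConvexOn 𝕜 (Set.Ioi (-a)) fun s => (s + a)⁻¹ := by
    simpa [Function.comp_def] using (convexOn_zpow (𝕜 := 𝕜) (-1)).translate_left a
  have h_scaled : ConvexOn 𝕜 (Set.Ioi (-a)) fun s => 2 * a * (s + a)⁻¹ :=
    h_inv.smul (by positivity)
  refine ((concaveOn_const 1 (convex_Ioi _)).sub h_scaled).congr fun s hs => ?_
  exact (sub_div_add_eq_one_sub (neg_lt_iff_pos_add.mp hs).ne').symm

lemma strictMonoOn_sub_div_add (ha : 0 < a) :
    StrictMonoOn (fun s => (s - a) / (s + a)) (Set.Ioi (-a)) := by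
  intro s hs t ht hst
  have hsa : 0 < s + a := neg_lt_iff_pos_add.mp hs
  have hta : 0 < t + a := neg_lt_iff_pos_add.mp ht
  calc (s - a) / (s + a) = 1 - 2 * a * (s + a)⁻¹ := sub_div_add_eq_one_sub hsa.ne'
    _ < 1 - 2 * a * (t + a)⁻¹ := by gcongr
    _ = (t - a) / (t + a) := (sub_div_add_eq_one_sub hta.ne').symm

end Moebius

lemma div_add_sqrt_sq {a u : ℝ} (ha : 0 < a) (hu : -a ^ 2 ≤ u) :
    u / (a + √(a ^ 2 + u)) ^ 2 = (√(a ^ 2 + u) - a) / (√(a ^ 2 + u) + a) := by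
  have hs : √(a ^ 2 + u) ^ 2 = a ^ 2 + u := sq_sqrt (by linarith)
  have h_factor : u = (√(a ^ 2 + u) - a) * (√(a ^ 2 + u) + a) := by linear_combination -hs
  have h_ne : √(a ^ 2 + u) + a ≠ 0 := by positivity
  rw [div_eq_div_iff (by positivity) h_ne]
  linear_combination (√(a ^ 2 + u) + a) * h_factor

lemma strictConcaveOn_sqrt_const_add (c : ℝ) :
    StrictConcaveOn ℝ (Set.Ici (-c)) fun u => √(c + u) := by
  simpa [Function.comp_def] using strictConcaveOn_sqrt.translate_right c

lemma strictMonoOn_sqrt_const_add (c : ℝ) :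
    StrictMonoOn (fun u => √(c + u)) (Set.Ici (-c)) :=
  fun _ hu _ _ huv => sqrt_lt_sqrt (neg_le_iff_add_nonneg'.mp hu) (by gcongr)

lemma image_sqrt_const_add_Ici (c : ℝ) :
    (fun u => √(c + u)) '' Set.Ici (-c) = Set.Ici 0 := by
  refine Set.Subset.antisymm (Set.image_subset_iff.mpr fun u _ => sqrt_nonneg _) fun s hs => ?_
  exact ⟨s ^ 2 - c, by simpa using sq_nonneg s, by simpa using sqrt_sq hs⟩

theorem stmt12_general (a : ℝ) (ha : 0 < a) :
    StrictConcaveOn ℝ (Set.Ici (-a ^ 2)) (fun u : ℝ => u / (a + √(a ^ 2 + u)) ^ 2) ∧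
      StrictMonoOn (fun u : ℝ => u / (a + √(a ^ 2 + u)) ^ 2) (Set.Ici (-a ^ 2)) := by
  have h_eq : Set.EqOn ((fun s => (s - a) / (s + a)) ∘ fun u => √(a ^ 2 + u))
      (fun u => u / (a + √(a ^ 2 + u)) ^ 2) (Set.Ici (-a ^ 2)) :=
    fun _ hu => (div_add_sqrt_sq ha hu).symm
  have h_image := image_sqrt_const_add_Ici (a ^ 2)
  have h_subset : Set.Ici 0 ⊆ Set.Ioi (-a) := Set.Ici_subset_Ioi.mpr (neg_lt_zero.mpr ha)
  have h_concave := (concaveOn_sub_div_add ha.le).subset h_subset (convex_Ici 0)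
  have h_mono := (strictMonoOn_sub_div_add ha).mono h_subset
  constructor
  · exact (ConcaveOn.comp_strictConcaveOn (h_image ▸ h_concave)
      (strictConcaveOn_sqrt_const_add (a ^ 2)) (h_image ▸ h_mono)).congr h_eq
  · exact (h_mono.comp (strictMonoOn_sqrt_const_add (a ^ 2)) fun _ _ => sqrt_nonneg _).congr h_eq

/-- For every `a > 0`, the function `u ↦ u/(a + √(a² + u))²` is concave
on `[0, ∞)`, and is nondecreasing there. -/
theorem stmt12 (a : ℝ) (ha : 0 < a) :
    ConcaveOn ℝ (Set.Ici 0) (fun u : ℝ => u / (a + Real.sqrt (a ^ 2 + u)) ^ 2) ∧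
      MonotoneOn (fun u : ℝ => u / (a + Real.sqrt (a ^ 2 + u)) ^ 2) (Set.Ici 0) := by
  have h_subset : Set.Ici 0 ⊆ Set.Ici (-a ^ 2) :=
    Set.Ici_subset_Ici.mpr (neg_nonpos.mpr (sq_nonneg a))
  exact (stmt12_general a ha).imp (·.concaveOn.subset h_subset (convex_Ici 0))
    (·.monotoneOn.mono h_subset)
end

section
/- Let a > 0 and let U be a nonnegative integrable real random variable. Then E[ U / (a + √(a² + U))² ] ≤ E[U] / (a + √(a² + E[U]))². -/
open MeasureTheory Real

/-!
On its natural domain `u ≥ -a²`, the function `u ↦ u / (a + √(a² + u))²` equals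
`1 - 2a / (a + √(a² + u))`, because `u = (√(a² + u) - a) (√(a² + u) + a)`. It is therefore concave,
the reciprocal of a positive concave function being convex, and Jensen's inequality applies; its
values lie in `[-1, 1]`, which supplies the integrability that Jensen requires.
-/

lemma convexOn_inv_of_concaveOn_of_pos {𝕜 E : Type*} [Field 𝕜] [LinearOrder 𝕜]
    [IsStrictOrderedRing 𝕜] [AddCommMonoid E] [SMul 𝕜 E] {s : Set E} {f : E → 𝕜}
    (hf : ConcaveOn 𝕜 s f) (hpos : ∀ x ∈ s, 0 < f x) : ConvexOn 𝕜 s fun x ↦ (f x)⁻¹ := by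
  refine ⟨hf.1, fun x hx y hy p q hp hq hpq ↦ ?_⟩
  have hinv : ConvexOn 𝕜 (Set.Ioi 0) fun t : 𝕜 ↦ t⁻¹ := by
    simpa only [zpow_neg_one] using convexOn_zpow (𝕜 := 𝕜) (-1)
  have hmean : 0 < p • f x + q • f y :=
    (convex_Ioi (0 : 𝕜)) (hpos x hx) (hpos y hy) hp hq hpq
  calc (f (p • x + q • y))⁻¹
      ≤ (p • f x + q • f y)⁻¹ := inv_anti₀ hmean (hf.2 hx hy hp hq hpq)
    _ ≤ p • (f x)⁻¹ + q • (f y)⁻¹ := hinv.2 (hpos x hx) (hpos y hy) hp hq hpq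

section

variable {a u : ℝ}

lemma div_sq_add_sqrt_eq_one_sub (ha : 0 < a) (hu : -a ^ 2 ≤ u) :
    u / (a + √(a ^ 2 + u)) ^ 2 = 1 - 2 * a * (a + √(a ^ 2 + u))⁻¹ := by
  have hsq : √(a ^ 2 + u) ^ 2 = a ^ 2 + u := sq_sqrt (by linarith)
  have hden : a + √(a ^ 2 + u) ≠ 0 := by positivity
  field_simp
  linear_combination -hsq

lemma abs_div_sq_add_sqrt_le_one (ha : 0 < a) (hu : -a ^ 2 ≤ u) :
    |u / (a + √(a ^ 2 + u)) ^ 2| ≤ 1 := by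
  have hden : 0 < a + √(a ^ 2 + u) := by positivity
  have hle : a * (a + √(a ^ 2 + u))⁻¹ ≤ 1 :=
    mul_inv_le_one_of_le₀ (le_add_of_nonneg_right (sqrt_nonneg _)) hden.le
  have hnonneg : 0 ≤ a * (a + √(a ^ 2 + u))⁻¹ := by positivity
  rw [div_sq_add_sqrt_eq_one_sub ha hu, abs_le]
  constructor <;> linarith

lemma continuous_div_sq_add_sqrt (ha : 0 < a) :
    Continuous fun u : ℝ ↦ u / (a + √(a ^ 2 + u)) ^ 2 :=
  continuous_id.div (by fun_prop) fun u ↦ by positivity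

lemma concaveOn_sqrt_const_add (c : ℝ) : ConcaveOn ℝ (Set.Ici (-c)) fun u ↦ √(c + u) := by
  simpa [Function.comp_def] using strictConcaveOn_sqrt.concaveOn.translate_right c

lemma concaveOn_div_sq_add_sqrt (ha : 0 < a) :
    ConcaveOn ℝ (Set.Ici (-a ^ 2)) fun u ↦ u / (a + √(a ^ 2 + u)) ^ 2 := by
  have hden : ConcaveOn ℝ (Set.Ici (-a ^ 2)) fun u ↦ a + √(a ^ 2 + u) :=
    (concaveOn_const a (convex_Ici _)).add (concaveOn_sqrt_const_add (a ^ 2))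
  have hinv : ConvexOn ℝ (Set.Ici (-a ^ 2)) fun u ↦ (a + √(a ^ 2 + u))⁻¹ :=
    convexOn_inv_of_concaveOn_of_pos hden fun u _ ↦ by positivity
  have hsub : ConcaveOn ℝ (Set.Ici (-a ^ 2)) fun u ↦ 1 - 2 * a * (a + √(a ^ 2 + u))⁻¹ :=
    (concaveOn_const 1 (convex_Ici _)).sub (hinv.smul (by positivity : 0 ≤ 2 * a))
  exact hsub.congr fun u hu ↦ (div_sq_add_sqrt_eq_one_sub ha hu).symm

end

lemma integrable_div_sq_add_sqrt {a : ℝ} (ha : 0 < a) {Ω : Type*} [MeasurableSpace Ω]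
    {P : Measure Ω} [IsFiniteMeasure P] {U : Ω → ℝ} (hU : AEStronglyMeasurable U P)
    (hUa : ∀ᵐ ω ∂P, -a ^ 2 ≤ U ω) :
    Integrable (fun ω ↦ U ω / (a + √(a ^ 2 + U ω)) ^ 2) P :=
  .of_bound ((continuous_div_sq_add_sqrt ha).comp_aestronglyMeasurable hU) 1
    (hUa.mono fun _ h ↦ abs_div_sq_add_sqrt_le_one ha h)

theorem stmt13_general (a : ℝ) (ha : 0 < a)
    {Ω : Type*} [MeasurableSpace Ω] (P : Measure Ω) [IsProbabilityMeasure P]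
    (U : Ω → ℝ) (hU : Integrable U P) (hUa : ∀ᵐ ω ∂P, -a ^ 2 ≤ U ω) :
    ∫ ω, U ω / (a + √(a ^ 2 + U ω)) ^ 2 ∂P ≤
      (∫ ω, U ω ∂P) / (a + √(a ^ 2 + ∫ ω, U ω ∂P)) ^ 2 :=
  (concaveOn_div_sq_add_sqrt ha).le_map_integral (continuous_div_sq_add_sqrt ha).continuousOn
    isClosed_Ici hUa hU (integrable_div_sq_add_sqrt ha hU.aestronglyMeasurable hUa)

/-- Let `a > 0` and let `U` be a nonnegative integrable real random
variable.  Then `E[U/(a + √(a² + U))²] ≤ E[U]/(a + √(a² + E[U]))²`. -/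
theorem stmt13 (a : ℝ) (ha : 0 < a)
    {Ω : Type*} [mΩ : MeasurableSpace Ω] (P : Measure Ω) [IsProbabilityMeasure P]
    (U : Ω → ℝ) (hU : Integrable U P) (hU0 : ∀ ω, 0 ≤ U ω) :
    ∫ ω, U ω / (a + Real.sqrt (a ^ 2 + U ω)) ^ 2 ∂P ≤
      (∫ ω, U ω ∂P) / (a + Real.sqrt (a ^ 2 + ∫ ω, U ω ∂P)) ^ 2 :=
  stmt13_general a ha P U hU <| .of_forall fun ω ↦
    (neg_nonpos.2 (sq_nonneg a)).trans (hU0 ω)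
end

section
/- For every c > 0, ∫₀¹ [ γc² / (1/2 + √(1/4 + γc²))² + γc²(1 + γc²) / (1/2 + √(1/4 + γc²(1 + γc²)))² ] dγ = ( log(√(4c² + 1) + 1) − log(c² + 1) − log 2 − √(4c² + 1) + 2c² + 1 ) / c². -/
open MeasureTheory Real

/-!
The number `y = 1/2 + √(1/4 + z)` is a root of `y² = y + z`, so `z / y² = 1 - 1/y`. This turns the
first summand, at `z = x`, into `1 - 1/y`, whose integral is elementary because `dx = (2y - 1) dy`;
in the second summand `z = x(1 + x)` has the rational root `y = 1 + x`. The substitution `x = γc²`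
then produces the division by `c²`.
-/

/-- The larger root `y` of the quadratic equation `y ^ 2 = y + z`. Both summands of the integrand
have the form `z / upperRoot z ^ 2`. For `z < -1/4`, where there is no real root, the value is
`1/2`. -/
noncomputable def upperRoot (z : ℝ) : ℝ := 1 / 2 + √(1 / 4 + z)

section UpperRoot

variable {a b x z : ℝ}

lemma upperRoot_pos (z : ℝ) : 0 < upperRoot z := by
  unfold upperRoot
  positivity

@[fun_prop]
lemma continuous_upperRoot : Continuous upperRoot := by
  unfold upperRoot
  fun_prop

lemma two_mul_upperRoot (z : ℝ) : 2 * upperRoot z = √(4 * z + 1) + 1 := by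
  have hsqrt : √(4 * z + 1) = 2 * √(1 / 4 + z) := by
    rw [show 4 * z + 1 = 2 ^ 2 * (1 / 4 + z) by ring, sqrt_mul (by positivity),
      sqrt_sq zero_le_two]
  rw [hsqrt, upperRoot]
  ring

lemma upperRoot_sq (hz : -1 / 4 ≤ z) : upperRoot z ^ 2 = upperRoot z + z := by
  have hsqrt : √(1 / 4 + z) ^ 2 = 1 / 4 + z := sq_sqrt (by linarith)
  unfold upperRoot
  linear_combination hsqrt

lemma upperRoot_mul_one_add (hx : -1 / 2 ≤ x) : upperRoot (x * (1 + x)) = 1 + x := by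
  rw [upperRoot, show 1 / 4 + x * (1 + x) = (x + 1 / 2) ^ 2 by ring, sqrt_sq (by linarith)]
  ring

lemma upperRoot_zero : upperRoot 0 = 1 := by
  simpa using upperRoot_mul_one_add (x := 0) (by norm_num)

lemma div_upperRoot_sq (hz : -1 / 4 ≤ z) :
    z / upperRoot z ^ 2 = 1 - (upperRoot z)⁻¹ := by
  have hy := (upperRoot_pos z).ne'
  field_simp
  linear_combination -upperRoot_sq hz

lemma mul_one_add_div_upperRoot_sq (hx : -1 / 2 ≤ x) :
    x * (1 + x) / upperRoot (x * (1 + x)) ^ 2 = 1 - (1 + x)⁻¹ := by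
  rw [div_upperRoot_sq (by nlinarith [sq_nonneg (x + 1 / 2)]), upperRoot_mul_one_add hx]

lemma hasDerivAt_upperRoot (hz : -1 / 4 < z) :
    HasDerivAt upperRoot (2 * upperRoot z - 1)⁻¹ z := by
  refine ((((hasDerivAt_id z).const_add (1 / 4)).sqrt ?_).const_add (1 / 2)).congr_deriv ?_
  · simp only [id_eq]
    linarith
  · simp only [id_eq, upperRoot, one_div]
    ring

lemma hasDerivAt_two_mul_upperRoot_sub_log (hz : -1 / 4 < z) :
    HasDerivAt (fun t ↦ 2 * upperRoot t - log (upperRoot t)) (upperRoot z)⁻¹ z := by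
  have hy := (upperRoot_pos z).ne'
  have hdiscr : 2 * upperRoot z - 1 ≠ 0 := by
    rw [two_mul_upperRoot, add_sub_cancel_right]
    exact (sqrt_pos.2 (by linarith)).ne'
  have hd := hasDerivAt_upperRoot hz
  refine ((hd.const_mul 2).sub (hd.log hy)).congr_deriv ?_
  field_simp

lemma intervalIntegrable_inv_upperRoot :
    IntervalIntegrable (fun t ↦ (upperRoot t)⁻¹) volume a b :=
  (continuous_upperRoot.inv₀ fun t ↦ (upperRoot_pos t).ne').intervalIntegrable a b

lemma continuous_div_upperRoot_sq : Continuous fun z ↦ z / upperRoot z ^ 2 :=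
  continuous_id.div₀ (by fun_prop) fun z ↦ (pow_pos (upperRoot_pos z) 2).ne'

lemma integral_inv_upperRoot (ha : -1 / 4 ≤ a) (hb : -1 / 4 ≤ b) :
    ∫ t in a..b, (upperRoot t)⁻¹ =
      (2 * upperRoot b - log (upperRoot b)) - (2 * upperRoot a - log (upperRoot a)) := by
  -- The derivative is only available in the open interval: `upperRoot` has a vertical tangent at
  -- `-1/4`.
  refine intervalIntegral.integral_eq_sub_of_hasDeriv_right
    (f := fun t ↦ 2 * upperRoot t - log (upperRoot t)) ?_ (fun t ht ↦ ?_)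
    intervalIntegrable_inv_upperRoot
  · exact ((continuous_upperRoot.const_mul 2).sub
      (continuous_upperRoot.log fun t ↦ (upperRoot_pos t).ne')).continuousOn
  · exact (hasDerivAt_two_mul_upperRoot_sub_log
      ((le_min ha hb).trans_lt ht.1)).hasDerivWithinAt

lemma integral_div_upperRoot_sq (hx : -1 / 4 ≤ x) :
    ∫ t in (0 : ℝ)..x, t / upperRoot t ^ 2 =
      x - 2 * upperRoot x + log (upperRoot x) + 2 := by
  have hcongr : Set.EqOn (fun t ↦ t / upperRoot t ^ 2) (fun t ↦ 1 - (upperRoot t)⁻¹)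
      (Set.uIcc 0 x) := fun t ht ↦
    div_upperRoot_sq ((le_inf (by norm_num) hx).trans ht.1)
  rw [intervalIntegral.integral_congr hcongr,
    intervalIntegral.integral_sub intervalIntegrable_const intervalIntegrable_inv_upperRoot,
    intervalIntegral.integral_const, integral_inv_upperRoot (by norm_num) hx, upperRoot_zero,
    log_one, smul_eq_mul]
  ring

lemma integral_mul_one_add_div_upperRoot_sq (hx : -1 / 2 ≤ x) :
    ∫ t in (0 : ℝ)..x, t * (1 + t) / upperRoot (t * (1 + t)) ^ 2 = x - log (1 + x) := by
  have hle : ∀ t ∈ Set.uIcc 0 x, -1 / 2 ≤ t := fun t ht ↦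
    (le_inf (by norm_num) hx).trans ht.1
  have hint : IntervalIntegrable (fun t : ℝ ↦ (1 + t)⁻¹) volume 0 x :=
    ContinuousOn.intervalIntegrable <| ContinuousOn.inv₀ (by fun_prop) fun t ht ↦
      (show 0 < 1 + t by linarith [hle t ht]).ne'
  have hcongr : Set.EqOn (fun t ↦ t * (1 + t) / upperRoot (t * (1 + t)) ^ 2)
      (fun t ↦ 1 - (1 + t)⁻¹) (Set.uIcc 0 x) := fun t ht ↦
    mul_one_add_div_upperRoot_sq (hle t ht)
  rw [intervalIntegral.integral_congr hcongr,
    intervalIntegral.integral_sub intervalIntegrable_const hint, intervalIntegral.integral_const,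
    intervalIntegral.integral_comp_add_left (fun t ↦ t⁻¹),
    integral_inv_of_pos (by norm_num) (by linarith)]
  simp

lemma integral_div_upperRoot_sq_add (hx : -1 / 4 ≤ x) :
    ∫ t in (0 : ℝ)..x,
        (t / upperRoot t ^ 2 + t * (1 + t) / upperRoot (t * (1 + t)) ^ 2) =
      log (√(4 * x + 1) + 1) - log (x + 1) - log 2 - √(4 * x + 1) + 2 * x + 1 := by
  have hcont₂ : Continuous fun t ↦ t * (1 + t) / upperRoot (t * (1 + t)) ^ 2 :=
    continuous_div_upperRoot_sq.comp (f := fun t ↦ t * (1 + t)) (by fun_prop)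
  have hlog : log (√(4 * x + 1) + 1) = log 2 + log (upperRoot x) := by
    rw [← two_mul_upperRoot, log_mul two_ne_zero (upperRoot_pos x).ne']
  rw [intervalIntegral.integral_add (continuous_div_upperRoot_sq.intervalIntegrable 0 x)
      (hcont₂.intervalIntegrable 0 x),
    integral_div_upperRoot_sq hx, integral_mul_one_add_div_upperRoot_sq (by linarith), hlog,
    add_comm 1 x]
  linear_combination -two_mul_upperRoot x

end UpperRoot

theorem stmt14_general (C : ℝ) (hC : -1 / 4 ≤ C) (hC₀ : C ≠ 0) :
    ∫ γ in (0 : ℝ)..1,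
        (γ * C / (1 / 2 + √(1 / 4 + γ * C)) ^ 2 +
          γ * C * (1 + γ * C) / (1 / 2 + √(1 / 4 + γ * C * (1 + γ * C))) ^ 2) =
      (log (√(4 * C + 1) + 1) - log (C + 1) - log 2 - √(4 * C + 1) + 2 * C + 1) / C := by
  have hsubst := intervalIntegral.integral_comp_mul_right (a := 0) (b := 1)
    (fun t ↦ t / upperRoot t ^ 2 + t * (1 + t) / upperRoot (t * (1 + t)) ^ 2) hC₀
  rw [zero_mul, one_mul, integral_div_upperRoot_sq_add hC, smul_eq_mul, inv_mul_eq_div] at hsubst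
  exact hsubst

/-- For every `c > 0`:
`∫₀¹ [γc²/(1/2 + √(1/4 + γc²))² + γc²(1+γc²)/(1/2 + √(1/4 + γc²(1+γc²)))²] dγ
 = (log(√(4c²+1) + 1) - log(c²+1) - log 2 - √(4c²+1) + 2c² + 1)/c²`. -/
theorem stmt14 (c : ℝ) (hc : 0 < c) :
    ∫ γ in (0 : ℝ)..1,
        (γ * c ^ 2 / (1 / 2 + Real.sqrt (1 / 4 + γ * c ^ 2)) ^ 2 +
          γ * c ^ 2 * (1 + γ * c ^ 2) /
            (1 / 2 + Real.sqrt (1 / 4 + γ * c ^ 2 * (1 + γ * c ^ 2))) ^ 2) =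
      (Real.log (Real.sqrt (4 * c ^ 2 + 1) + 1) - Real.log (c ^ 2 + 1) - Real.log 2 -
          Real.sqrt (4 * c ^ 2 + 1) + 2 * c ^ 2 + 1) / c ^ 2 :=
  stmt14_general (c ^ 2) (by linarith [sq_nonneg c]) (by positivity)
end

section
/- There exists c ∈ (1.860, 1.861) such that ∫₀¹ [ γc² / (1/2 + √(1/4 + γc²))² + γc²(1 + γc²) / (1/2 + √(1/4 + γc²(1 + γc²)))² ] dγ = 1. -/
open MeasureTheory Real

/-!
Let `u = 1 / 2 + √(1 / 4 + t)`, the larger root of `u ^ 2 - u = t`. Then `t / u ^ 2 = 1 - u⁻¹`, and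
for `t * (1 + t)` in place of `t` the root is `1 + t`, so the integrand, as a function of
`t = γ * c ^ 2`, is `2 - u⁻¹ - (1 + t)⁻¹`. A primitive is `2 * t - 2 * u + log u - log (1 + t)`.
Writing `c ^ 2 = u ^ 2 - u` removes the square roots and turns the equation into
`exp ((u - 1) * (u - 2)) = u - 1 + u⁻¹`, which has a solution near `2.42694` by the intermediate
value theorem.
-/

/-- The larger root `u` of `u ^ 2 - u = t`. It is real for `-1 / 4 ≤ t`; below that, `√` is `0` and
the value is `1 / 2`. The denominators of the threshold equation are squares of such roots. -/
noncomputable def largerRoot (t : ℝ) : ℝ := 1 / 2 + √(1 / 4 + t)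

/-- The integrand of the threshold equation, as a function of `t = γ * c ^ 2`. -/
noncomputable def thresholdIntegrand (t : ℝ) : ℝ :=
  t / largerRoot t ^ 2 + t * (1 + t) / largerRoot (t * (1 + t)) ^ 2

lemma largerRoot_pos (t : ℝ) : 0 < largerRoot t := by
  unfold largerRoot
  positivity

lemma largerRoot_sq {t : ℝ} (ht : -1 / 4 ≤ t) : largerRoot t ^ 2 = largerRoot t + t := by
  have hsq : √(1 / 4 + t) ^ 2 = 1 / 4 + t := Real.sq_sqrt (by linarith)
  unfold largerRoot
  linear_combination hsq

lemma largerRoot_sq_sub_self {u : ℝ} (hu : 1 / 2 ≤ u) : largerRoot (u ^ 2 - u) = u := by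
  have hsq : 1 / 4 + (u ^ 2 - u) = (u - 1 / 2) ^ 2 := by ring
  rw [largerRoot, hsq, Real.sqrt_sq (by linarith)]
  ring

lemma largerRoot_zero : largerRoot 0 = 1 := by
  simpa using largerRoot_sq_sub_self (u := 1) (by norm_num)

lemma largerRoot_mul_one_add {t : ℝ} (ht : -1 / 2 ≤ t) : largerRoot (t * (1 + t)) = 1 + t := by
  have harg : t * (1 + t) = (1 + t) ^ 2 - (1 + t) := by ring
  rw [harg, largerRoot_sq_sub_self (by linarith)]

lemma div_largerRoot_sq {t : ℝ} (ht : -1 / 4 ≤ t) :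
    t / largerRoot t ^ 2 = 1 - (largerRoot t)⁻¹ := by
  have hpos := largerRoot_pos t
  field_simp
  linear_combination -largerRoot_sq ht

lemma thresholdIntegrand_eq {t : ℝ} (ht : -1 / 4 ≤ t) :
    thresholdIntegrand t = 2 - (largerRoot t)⁻¹ - (1 + t)⁻¹ := by
  have hprod : -1 / 4 ≤ t * (1 + t) := by linarith [sq_nonneg (t + 1 / 2)]
  rw [thresholdIntegrand, div_largerRoot_sq ht, div_largerRoot_sq hprod,
    largerRoot_mul_one_add (by linarith)]
  ring

lemma continuous_largerRoot : Continuous largerRoot := by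
  unfold largerRoot
  fun_prop

lemma hasDerivAt_largerRoot {t : ℝ} (ht : -1 / 4 < t) :
    HasDerivAt largerRoot (1 / (2 * largerRoot t - 1)) t := by
  have hsqrt := (((hasDerivAt_id t).const_add (1 / 4)).sqrt (by simp only [id]; linarith)).const_add
    (1 / 2)
  refine hsqrt.congr_deriv ?_
  simp only [largerRoot, id]
  ring

lemma hasDerivAt_two_mul_largerRoot_sub_log {t : ℝ} (ht : -1 / 4 < t) :
    HasDerivAt (fun t ↦ 2 * largerRoot t - log (largerRoot t)) (largerRoot t)⁻¹ t := by
  have hroot := hasDerivAt_largerRoot ht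
  have hpos := largerRoot_pos t
  have hslope : 0 < 2 * largerRoot t - 1 := by
    have hsqrt : 0 < √(1 / 4 + t) := Real.sqrt_pos.2 (by linarith)
    unfold largerRoot
    linarith
  refine ((hroot.const_mul 2).sub (hroot.log hpos.ne')).congr_deriv ?_
  field_simp

lemma hasDerivAt_thresholdIntegrand_primitive {t : ℝ} (ht : -1 / 4 < t) :
    HasDerivAt (fun t ↦ 2 * t - (2 * largerRoot t - log (largerRoot t)) - log (1 + t))
      (thresholdIntegrand t) t := by
  have hlog := ((hasDerivAt_id t).const_add 1).log (by simp only [id]; linarith)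
  refine ((((hasDerivAt_id t).const_mul 2).sub
    (hasDerivAt_two_mul_largerRoot_sub_log ht)).sub hlog).congr_deriv ?_
  simp only [thresholdIntegrand_eq ht.le, mul_one, one_div, id]

lemma continuous_thresholdIntegrand : Continuous thresholdIntegrand := by
  have hroot := continuous_largerRoot
  have hroot_ne (t : ℝ) : largerRoot t ^ 2 ≠ 0 := (pow_pos (largerRoot_pos t) 2).ne'
  unfold thresholdIntegrand
  fun_prop (disch := simp only [hroot_ne, ne_eq, not_false_eq_true, implies_true])

lemma integral_thresholdIntegrand {x : ℝ} (hx : -1 / 4 < x) :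
    ∫ t in (0 : ℝ)..x, thresholdIntegrand t =
      2 * x - 2 * (largerRoot x - 1) + log (largerRoot x) - log (1 + x) := by
  have hsub : Set.uIcc 0 x ⊆ Set.Ioi (-1 / 4) :=
    Set.ordConnected_Ioi.uIcc_subset (by norm_num) hx
  rw [intervalIntegral.integral_eq_sub_of_hasDerivAt
    (fun t ht ↦ hasDerivAt_thresholdIntegrand_primitive (hsub ht))
    (continuous_thresholdIntegrand.intervalIntegrable 0 x)]
  simp only [largerRoot_zero, add_zero, log_one]
  ring

lemma integral_thresholdIntegrand_sq_sub_self {u : ℝ} (hu : 1 / 2 < u) :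
    ∫ t in (0 : ℝ)..(u ^ 2 - u), thresholdIntegrand t =
      2 * (u - 1) ^ 2 - log (u - 1 + u⁻¹) := by
  have hu0 : 0 < u := by linarith
  have hsq : 0 < (u - 1 / 2) ^ 2 := pow_pos (by linarith) 2
  have hfactor : 1 + (u ^ 2 - u) = u * (u - 1 + u⁻¹) := by
    field_simp
    ring
  have hcofactor : 0 < u - 1 + u⁻¹ :=
    pos_of_mul_pos_right (a := u) (by rw [← hfactor]; linarith) hu0.le
  rw [integral_thresholdIntegrand (by linarith), largerRoot_sq_sub_self hu.le, hfactor,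
    log_mul hu0.ne' hcofactor.ne']
  ring

lemma integral_thresholdIntegrand_mul_eq_one {u : ℝ} (hu : 1 / 2 < u) (hu1 : u ≠ 1)
    (h : exp ((u - 1) * (u - 2)) = u - 1 + u⁻¹) :
    ∫ γ in (0 : ℝ)..1, thresholdIntegrand (γ * (u ^ 2 - u)) = 1 := by
  have hscale : u ^ 2 - u ≠ 0 := by
    have hfactor : u ^ 2 - u = u * (u - 1) := by ring
    rw [hfactor]
    exact mul_ne_zero (by linarith) (sub_ne_zero.2 hu1)
  rw [intervalIntegral.integral_comp_mul_right _ hscale, zero_mul, one_mul,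
    integral_thresholdIntegrand_sq_sub_self hu, ← h, log_exp, smul_eq_mul,
    inv_mul_eq_one₀ hscale]
  ring

-- The endpoints are chosen so that `1.860 ^ 2 < u ^ 2 - u < 1.861 ^ 2` on the whole interval.
lemma exists_exp_eq_sub_one_add_inv :
    ∃ u ∈ Set.Ioo (2.4261 : ℝ) 2.42699, exp ((u - 1) * (u - 2)) = u - 1 + u⁻¹ := by
  let gap (u : ℝ) : ℝ := exp ((u - 1) * (u - 2)) - (u - 1 + u⁻¹)
  have hcont : ContinuousOn gap (Set.Icc 2.4261 2.42699) := by
    have hne : ∀ u ∈ Set.Icc (2.4261 : ℝ) 2.42699, u ≠ 0 := fun u hu ↦ by linarith [hu.1]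
    fun_prop (disch := assumption)
  have hneg : gap 2.4261 < 0 := by
    refine sub_neg.2 ((exp_bound' (n := 7) ?_ ?_ ?_).trans_lt ?_) <;>
      norm_num [Finset.sum_range_succ, Nat.factorial]
  have hpos : 0 < gap 2.42699 := by
    refine sub_pos.2 (lt_of_lt_of_le ?_ (sum_le_exp_of_nonneg ?_ 7)) <;>
      norm_num [Finset.sum_range_succ, Nat.factorial]
  obtain ⟨u, hu, hzero⟩ := intermediate_value_Ioo (by norm_num) hcont ⟨hneg, hpos⟩
  exact ⟨u, hu, sub_eq_zero.1 hzero⟩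

/-- There exists `c ∈ (1.860, 1.861)` such that
`∫₀¹ [γc²/(1/2 + √(1/4 + γc²))² + γc²(1+γc²)/(1/2 + √(1/4 + γc²(1+γc²)))²] dγ = 1`.
(This equation determines `c = lim_{n→∞} R̄_n/√n ≈ 1.860935682`.) -/
theorem stmt15 :
    ∃ c : ℝ, c ∈ Set.Ioo (1.860 : ℝ) 1.861 ∧
      ∫ γ in (0 : ℝ)..1,
          (γ * c ^ 2 / (1 / 2 + Real.sqrt (1 / 4 + γ * c ^ 2)) ^ 2 +
            γ * c ^ 2 * (1 + γ * c ^ 2) /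
              (1 / 2 + Real.sqrt (1 / 4 + γ * c ^ 2 * (1 + γ * c ^ 2))) ^ 2) = 1 := by
  obtain ⟨u, ⟨hlower, hupper⟩, hu⟩ := exists_exp_eq_sub_one_add_inv
  have hsq : √(u ^ 2 - u) ^ 2 = u ^ 2 - u := Real.sq_sqrt (by nlinarith)
  refine ⟨√(u ^ 2 - u), ⟨Real.lt_sqrt_of_sq_lt ?_, (Real.sqrt_lt' ?_).2 ?_⟩, ?_⟩
  · nlinarith
  · norm_num
  · nlinarith
  · simpa only [thresholdIntegrand, largerRoot, hsq] using
      integral_thresholdIntegrand_mul_eq_one (by linarith) (by linarith) hu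
end

section
/- Let R > 0 and define f_Y(y) = (1/2)(φ₁(y − R) + φ₁(y + R)), the output density for the scalar Gaussian channel with input uniform on {−R, R}. Then ∫_ℝ (φ₁(y − R) − φ₁(y)) log(1/f_Y(y)) dy = −R ∫_ℝ (Q(w − R) − Q(w)) tanh(R w) dw + R²/2. -/
open MeasureTheory Real

/-- The standard Gaussian density `φ₁(t) = (2π)^{-1/2} e^{-t²/2}` on `ℝ`. -/
noncomputable def gaussDensity1 (t : ℝ) : ℝ :=
  (2 * Real.pi) ^ (-(1 : ℝ) / 2) * Real.exp (-t ^ 2 / 2)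

/-- The standard Gaussian tail function `Q(x) = ∫_x^∞ (2π)^{-1/2} e^{-t²/2} dt`. -/
noncomputable def gaussQ (x : ℝ) : ℝ :=
  ∫ t in Set.Ioi x, (2 * Real.pi) ^ (-(1 : ℝ) / 2) * Real.exp (-t ^ 2 / 2)

/-!
Completing the square gives `f_Y y = exp (-R² / 2) φ₁(y) cosh (R y)`, hence
`log (1 / f_Y y) = c + y² / 2 - log cosh (R y)` with `c` constant. Integrating against
`φ₁(y - x) - φ₁(y)` is taking the difference of the expectations under `N(x, 1)` and `N(0, 1)`: the
constant cancels and the quadratic part contributes `x² / 2`. For the Lipschitz function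
`g y = log cosh (R y)`, writing `g (z + x) - g z` as the integral of `g'` and exchanging integrals
turns the density difference into the tail difference `Q (w - x) - Q w` against
`g' w = R tanh (R w)`.
-/

open ProbabilityTheory
open scoped NNReal

section Translation

variable {f g h : ℝ → ℝ} {K : ℝ≥0} {C : ℝ}

lemma integrable_mul_comp_add_of_abs_le (ν : Measure ℝ) [IsFiniteMeasure ν] (hf : Integrable f)
    (hh : Measurable h) (hC : ∀ y, |h y| ≤ C) :
    Integrable (fun p : ℝ × ℝ ↦ f p.2 * h (p.2 + p.1)) (ν.prod volume) := by
  have hsnd : Integrable (fun p : ℝ × ℝ ↦ f p.2) (ν.prod volume) := hf.comp_snd ν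
  have hmeas : Measurable fun p : ℝ × ℝ ↦ h (p.2 + p.1) := by fun_prop
  exact hsnd.mul_bdd hmeas.aestronglyMeasurable (.of_forall fun p ↦ hC (p.2 + p.1))

lemma integral_mul_intervalIntegral_comp_add (hf : Integrable f) (hh : Measurable h)
    (hC : ∀ y, |h y| ≤ C) (a b : ℝ) :
    ∫ z, f z * ∫ t in a..b, h (z + t) = ∫ w, (∫ t in a..b, f (w - t)) * h w := by
  have : IsFiniteMeasure (volume.restrict (Set.uIoc a b)) :=
    inferInstanceAs (IsFiniteMeasure (volume.restrict (Set.Ioc _ _)))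
  have hadd := integrable_mul_comp_add_of_abs_le (volume.restrict (Set.uIoc a b)) hf hh hC
  have hsub : Integrable (fun p : ℝ × ℝ ↦ f (p.2 - p.1) * h p.2)
      ((volume.restrict (Set.uIoc a b)).prod volume) := by
    simpa [Function.comp_def] using
      (measurePreserving_prod_sub _ _).integrable_comp_of_integrable hadd
  calc ∫ z, f z * ∫ t in a..b, h (z + t)
      = ∫ z, ∫ t in a..b, f z * h (z + t) := by simp only [intervalIntegral.integral_const_mul]
    _ = ∫ t in a..b, ∫ z, f z * h (z + t) := (intervalIntegral_integral_swap hadd).symm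
    _ = ∫ t in a..b, ∫ w, f (w - t) * h w := by
        refine intervalIntegral.integral_congr fun t _ ↦ ?_
        simpa using (integral_sub_right_eq_self (fun z ↦ f z * h (z + t)) t).symm
    _ = ∫ w, ∫ t in a..b, f (w - t) * h w := intervalIntegral_integral_swap hsub
    _ = ∫ w, (∫ t in a..b, f (w - t)) * h w := by
        simp only [intervalIntegral.integral_mul_const]

lemma intervalIntegral_deriv_add_of_lipschitzWith (hg : LipschitzWith K g) (z x : ℝ) :
    ∫ t in (0 : ℝ)..x, deriv g (z + t) = g (z + x) - g z := by
  rw [intervalIntegral.integral_comp_add_left (deriv g), add_zero,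
    hg.lipschitzOnWith.absolutelyContinuousOnInterval.integral_deriv_eq_sub]

lemma integrable_mul_comp_add_of_lipschitzWith (hf : Integrable f) (hg : LipschitzWith K g)
    (hfg : Integrable fun y ↦ f y * g y) (x : ℝ) : Integrable fun y ↦ f y * g (y + x) := by
  have hgc := hg.continuous
  have hdiff : Integrable fun y ↦ f y * (g (y + x) - g y) :=
    hf.mul_bdd (c := K * |x|) (by fun_prop) (.of_forall fun y ↦ by
      simpa [Real.dist_eq] using hg.dist_le_mul (y + x) y)
  refine (hdiff.add hfg).congr (.of_forall fun y ↦ ?_)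
  simp only [Pi.add_apply]
  ring

/- `g (z + x) - g z` is the integral of `deriv g` over `[z, z + x]`, so the integration by parts is
an exchange of integrals: no decay of the tail of `f` is needed to control boundary terms. -/
lemma integral_translate_sub_mul_of_lipschitzWith (hf : Integrable f) (hg : LipschitzWith K g)
    (hfg : Integrable fun y ↦ f y * g y) (x : ℝ) :
    ∫ y, (f (y - x) - f y) * g y = ∫ w, (∫ t in (w - x)..w, f t) * deriv g w := by
  have hfgx := integrable_mul_comp_add_of_lipschitzWith hf hg hfg x
  have hfxg : Integrable fun y ↦ f (y - x) * g y := by simpa using hfgx.comp_sub_right x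
  calc ∫ y, (f (y - x) - f y) * g y
      = (∫ y, f (y - x) * g y) - ∫ y, f y * g y := by
        simp only [sub_mul, integral_sub hfxg hfg]
    _ = (∫ z, f z * g (z + x)) - ∫ z, f z * g z := by
        simpa using integral_sub_right_eq_self (fun z ↦ f z * g (z + x)) x
    _ = ∫ z, f z * ∫ t in (0 : ℝ)..x, deriv g (z + t) := by
        simp only [intervalIntegral_deriv_add_of_lipschitzWith hg, mul_sub,
          integral_sub hfgx hfg]
    _ = ∫ w, (∫ t in (0 : ℝ)..x, f (w - t)) * deriv g w :=
        integral_mul_intervalIntegral_comp_add hf (measurable_deriv g)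
          (fun _ ↦ norm_deriv_le_of_lipschitz hg) 0 x
    _ = ∫ w, (∫ t in (w - x)..w, f t) * deriv g w := by
        simp only [intervalIntegral.integral_comp_sub_left, sub_zero]

end Translation

section Gaussian

lemma gaussDensity1_sub_eq_gaussianPDFReal (x y : ℝ) :
    gaussDensity1 (y - x) = gaussianPDFReal x 1 y := by
  rw [gaussDensity1, gaussianPDFReal, Real.sqrt_eq_rpow, ← Real.rpow_neg (by positivity)]
  norm_num

lemma gaussDensity1_pos (y : ℝ) : 0 < gaussDensity1 y := by
  rw [gaussDensity1]
  positivity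

lemma log_gaussDensity1 (y : ℝ) :
    Real.log (gaussDensity1 y) = -(Real.log (2 * π) + y ^ 2) / 2 := by
  rw [gaussDensity1, Real.log_mul (by positivity) (Real.exp_pos _).ne',
    Real.log_rpow (by positivity), Real.log_exp]
  ring

lemma integrable_gaussDensity1 : Integrable gaussDensity1 := by
  have hpdf : gaussDensity1 = gaussianPDFReal 0 1 :=
    funext fun y ↦ by rw [← gaussDensity1_sub_eq_gaussianPDFReal, sub_zero]
  exact hpdf ▸ integrable_gaussianPDFReal 0 1

lemma gaussQ_sub_gaussQ (x w : ℝ) :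
    gaussQ (w - x) - gaussQ w = ∫ t in (w - x)..w, gaussDensity1 t :=
  intervalIntegral.integral_Ioi_sub_Ioi' integrable_gaussDensity1.integrableOn
    integrable_gaussDensity1.integrableOn

lemma integrable_gaussianReal_one_iff {g : ℝ → ℝ} {x : ℝ} :
    Integrable g (gaussianReal x 1) ↔ Integrable fun y ↦ gaussDensity1 (y - x) * g y := by
  simp only [gaussianReal_of_var_ne_zero x one_ne_zero, gaussDensity1_sub_eq_gaussianPDFReal,
    smul_eq_mul, integrable_withDensity_iff_integrable_smul' (measurable_gaussianPDF x 1)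
      (.of_forall fun _ ↦ gaussianPDF_lt_top), toReal_gaussianPDF]

lemma integral_gaussianReal_sub_integral_gaussianReal_zero {g : ℝ → ℝ} {x : ℝ}
    (hx : Integrable g (gaussianReal x 1)) (h0 : Integrable g (gaussianReal 0 1)) :
    ∫ y, g y ∂gaussianReal x 1 - ∫ y, g y ∂gaussianReal 0 1 =
      ∫ y, (gaussDensity1 (y - x) - gaussDensity1 y) * g y := by
  rw [integrable_gaussianReal_one_iff] at hx h0
  simp only [sub_zero] at h0
  simp only [integral_gaussianReal_eq_integral_smul one_ne_zero,
    ← gaussDensity1_sub_eq_gaussianPDFReal, smul_eq_mul, sub_zero, sub_mul, integral_sub hx h0]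

lemma integrable_sq_gaussianReal (x : ℝ) (v : ℝ≥0) :
    Integrable (fun y ↦ y ^ 2) (gaussianReal x v) :=
  (memLp_id_gaussianReal 2).integrable_sq

lemma integral_sq_gaussianReal (x : ℝ) (v : ℝ≥0) : ∫ y, y ^ 2 ∂gaussianReal x v = x ^ 2 + v := by
  have hvar := variance_eq_sub (memLp_id_gaussianReal (μ := x) (v := v) 2)
  simp only [variance_id_gaussianReal, Pi.pow_apply, id, integral_id_gaussianReal] at hvar
  linarith

end Gaussian

section LogCosh

lemma hasDerivAt_log_cosh_mul (R y : ℝ) :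
    HasDerivAt (fun y ↦ Real.log (Real.cosh (R * y))) (R * Real.tanh (R * y)) y := by
  convert (hasDerivAt_const_mul R).cosh.log (Real.cosh_pos (R * y)).ne' using 1
  rw [Real.tanh_eq_sinh_div_cosh]
  ring

lemma lipschitzWith_log_cosh_mul (R : ℝ) :
    LipschitzWith ‖R‖₊ fun y ↦ Real.log (Real.cosh (R * y)) := by
  refine lipschitzWith_of_nnnorm_deriv_le
    (fun y ↦ (hasDerivAt_log_cosh_mul R y).differentiableAt) fun y ↦ ?_
  rw [(hasDerivAt_log_cosh_mul R y).deriv, nnnorm_mul]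
  exact mul_le_of_le_one_right' (abs_tanh_lt_one (R * y)).le

lemma integrable_log_cosh_mul_gaussianReal (R x : ℝ) (v : ℝ≥0) :
    Integrable (fun y ↦ Real.log (Real.cosh (R * y))) (gaussianReal x v) :=
  memLp_one_iff_integrable.1 <|
    (lipschitzWith_log_cosh_mul R).comp_memLp (by simp) (memLp_id_gaussianReal 1)

lemma integral_log_cosh_mul_gaussianReal_sub_zero (R x : ℝ) :
    ∫ y, Real.log (Real.cosh (R * y)) ∂gaussianReal x 1
        - ∫ y, Real.log (Real.cosh (R * y)) ∂gaussianReal 0 1 =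
      R * ∫ w, (gaussQ (w - x) - gaussQ w) * Real.tanh (R * w) := by
  have h0 := integrable_log_cosh_mul_gaussianReal R 0 1
  have hdensity : Integrable fun y ↦ gaussDensity1 y * Real.log (Real.cosh (R * y)) := by
    simpa only [sub_zero] using integrable_gaussianReal_one_iff.1 h0
  rw [integral_gaussianReal_sub_integral_gaussianReal_zero
      (integrable_log_cosh_mul_gaussianReal R x 1) h0,
    integral_translate_sub_mul_of_lipschitzWith integrable_gaussDensity1
      (lipschitzWith_log_cosh_mul R) hdensity,
    ← integral_const_mul]
  simp only [← gaussQ_sub_gaussQ, (hasDerivAt_log_cosh_mul R _).deriv, mul_left_comm]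

end LogCosh

section TwoPointInput

/-- The output density `f_Y` of the scalar Gaussian channel with input uniform on `{-R, R}`, whose
logarithm enters the information density of that input; `R` ranges over all reals. -/
noncomputable def gaussTwoPointDensity (R y : ℝ) : ℝ :=
  (1 / 2) * (gaussDensity1 (y - R) + gaussDensity1 (y + R))

lemma gaussTwoPointDensity_eq_mul_cosh (R y : ℝ) :
    gaussTwoPointDensity R y =
      Real.exp (-(R ^ 2) / 2) * gaussDensity1 y * Real.cosh (R * y) := by
  have hsub : -(y - R) ^ 2 / 2 = -(R ^ 2) / 2 + -y ^ 2 / 2 + R * y := by ring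
  have hadd : -(y + R) ^ 2 / 2 = -(R ^ 2) / 2 + -y ^ 2 / 2 + -(R * y) := by ring
  simp only [gaussTwoPointDensity, gaussDensity1, hsub, hadd, Real.exp_add, Real.cosh_eq]
  ring

lemma log_one_div_gaussTwoPointDensity (R y : ℝ) :
    Real.log (1 / gaussTwoPointDensity R y) =
      (Real.log (2 * π) + R ^ 2 + y ^ 2) / 2 - Real.log (Real.cosh (R * y)) := by
  have hexp := Real.exp_ne_zero (-(R ^ 2) / 2)
  have hdensity := (gaussDensity1_pos y).ne'
  rw [gaussTwoPointDensity_eq_mul_cosh, one_div, Real.log_inv,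
    Real.log_mul (mul_ne_zero hexp hdensity) (Real.cosh_pos _).ne', Real.log_mul hexp hdensity,
    Real.log_exp, log_gaussDensity1]
  ring

lemma integrable_quadratic_gaussianReal (c m : ℝ) (v : ℝ≥0) :
    Integrable (fun y ↦ (c + y ^ 2) / 2) (gaussianReal m v) :=
  ((integrable_const c).add (integrable_sq_gaussianReal m v)).div_const 2

lemma integrable_log_one_div_gaussTwoPointDensity (R m : ℝ) (v : ℝ≥0) :
    Integrable (fun y ↦ Real.log (1 / gaussTwoPointDensity R y)) (gaussianReal m v) := by
  simp only [log_one_div_gaussTwoPointDensity]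
  exact (integrable_quadratic_gaussianReal _ m v).sub (integrable_log_cosh_mul_gaussianReal R m v)

lemma integral_log_one_div_gaussTwoPointDensity (R m : ℝ) (v : ℝ≥0) :
    ∫ y, Real.log (1 / gaussTwoPointDensity R y) ∂gaussianReal m v =
      (Real.log (2 * π) + R ^ 2 + (m ^ 2 + v)) / 2
        - ∫ y, Real.log (Real.cosh (R * y)) ∂gaussianReal m v := by
  simp only [log_one_div_gaussTwoPointDensity]
  rw [integral_sub (integrable_quadratic_gaussianReal _ m v)
      (integrable_log_cosh_mul_gaussianReal R m v), integral_div,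
    integral_add (integrable_const _) (integrable_sq_gaussianReal m v), integral_const,
    integral_sq_gaussianReal, probReal_univ, one_smul]

end TwoPointInput

theorem stmt19_general (R x : ℝ) (fY : ℝ → ℝ)
    (hfY : ∀ y, fY y = (1 / 2) * (gaussDensity1 (y - R) + gaussDensity1 (y + R))) :
    ∫ y : ℝ, (gaussDensity1 (y - x) - gaussDensity1 y) * Real.log (1 / fY y) =
      -R * (∫ w : ℝ, (gaussQ (w - x) - gaussQ w) * Real.tanh (R * w)) + x ^ 2 / 2 := by
  obtain rfl : fY = gaussTwoPointDensity R := funext hfY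
  rw [← integral_gaussianReal_sub_integral_gaussianReal_zero
      (integrable_log_one_div_gaussTwoPointDensity R x 1)
      (integrable_log_one_div_gaussTwoPointDensity R 0 1),
    integral_log_one_div_gaussTwoPointDensity, integral_log_one_div_gaussTwoPointDensity]
  linarith [integral_log_cosh_mul_gaussianReal_sub_zero R x]

/-- For `R > 0` and `f_Y(y) = (1/2)(φ₁(y-R) + φ₁(y+R))` (the output
density for the scalar Gaussian channel with input uniform on `{-R, R}`):
`∫_ℝ (φ₁(y-R) - φ₁(y)) log(1/f_Y(y)) dy
  = -R ∫_ℝ (Q(w-R) - Q(w)) tanh(Rw) dw + R²/2`. -/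
theorem stmt19 (R : ℝ) (hR : 0 < R)
    (fY : ℝ → ℝ) (hfY : ∀ y, fY y = (1 / 2) * (gaussDensity1 (y - R) + gaussDensity1 (y + R))) :
    ∫ y : ℝ, (gaussDensity1 (y - R) - gaussDensity1 y) * Real.log (1 / fY y) =
      -R * (∫ w : ℝ, (gaussQ (w - R) - gaussQ w) * Real.tanh (R * w)) + R ^ 2 / 2 :=
  stmt19_general R R fY hfY
end
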